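/- Fix K ≥ 1, n ∈ ℕ, and ε > 0. Then there exist m ∈ ℕ and a finite set I ⊆ [1, ∞] such that: for every Banach space X and every finite basic sequence (x₁, …, x_m) in X with basis constant at most K, there exist p ∈ I, indices 0 ≤ q₁ < q₂ < … < q_{n+1} ≤ m, and scalars (bᵢ) such that the block vectors yⱼ = Σ_{i=q_j+1}^{q_{j+1}} bᵢ xᵢ (1 ≤ j ≤ n) are (1+ε)-equivalent to the unit vector basis of ℓ_p^n. -/

import Mathlib

open scoped ENNReal

/-- The `ℓ_p^n` norm of the coefficient vector `c` (with the sup-norm convention for `p = ∞`). -/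
noncomputable def lpNorm {n : ℕ} (p : ℝ≥0∞) (c : Fin n → ℝ) : ℝ :=
  if p = ∞ then ⨆ i, |c i| else (∑ i, |c i| ^ p.toReal) ^ (1 / p.toReal)

/-!
Let `N` be the seminorm that the sequence induces on finitely supported coefficient vectors. Its
iterated limits along an ultrafilter form a spreading model, which is nontrivial because the
differences `e_i - e_j` are bounded below. In a spreading model the differences of neighbouring
basis vectors are suppression unconditional, and long alternating blocks of these differences,
normalised, are unconditional in the limit; each passage keeps the vectors block vectors of the
original sequence.

For an unconditional spreading seminorm on vectors indexed by `ℚ`, let `T_n u` consist of `n` copies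
of `u`, compressed into `[0, 1)` and placed side by side. Since `T_m T_n = T_{mn}` these operators
commute, so (Lemberg) they have common approximate eigenvectors: positive `u` with
`T_n u ≈ n ^ θ • u` for all `n` at once, where `0 ≤ θ ≤ 1`. A combination of translates of `u` with
coefficients `a_j ^ θ`, `a_j ∈ ℕ`, has nearly the same seminorm as the concatenation of the
`T_{a_j} u`, that is as `T_{∑ a_j} u`, which is nearly `(∑ a_j) ^ θ`. Hence the translates of `u`
span `ℓ_p` with `p = 1 / θ`.

Uniformity is a compactness argument: if no `m` worked, an ultralimit of counterexamples would be a
seminorm contradicting the infinite statement. A finite set of exponents is enough because the norm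
of `ℓ_p^n` depends continuously on `1 / p ∈ [0, 1]`.
-/

namespace Krivine

open Filter Topology Finset

section SeminormLimits

variable {α V : Type*} [AddCommGroup V] [Module ℝ V] {l : Filter α} {s : α → Seminorm ℝ V}

theorem exists_seminorm_of_tendsto [l.NeBot] (h : ∀ v, ∃ L, Tendsto (s · v) l (𝓝 L)) :
    ∃ S : Seminorm ℝ V, ∀ v, Tendsto (s · v) l (𝓝 (S v)) := by
  choose S hS using h
  refine ⟨Seminorm.of S (fun x y => ?_) (fun t x => ?_), hS⟩
  · exact le_of_tendsto_of_tendsto' (hS (x + y)) ((hS x).add (hS y))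
      fun a => map_add_le_add (s a) x y
  · refine tendsto_nhds_unique (hS (t • x)) (((hS x).const_mul ‖t‖).congr fun a => ?_)
    rw [map_smul_eq_mul]

theorem exists_tendsto_of_eventually_mem_Icc (U : Ultrafilter α) {u : α → ℝ} {a b : ℝ}
    (h : ∀ᶠ x in (U : Filter α), u x ∈ Set.Icc a b) :
    ∃ L ∈ Set.Icc a b, Tendsto u U (𝓝 L) :=
  isCompact_Icc.ultrafilter_le_nhds (U.map u) (le_principal_iff.2 h)

theorem exists_seminorm_tendsto_of_eventually_le (U : Ultrafilter α)
    (h : ∀ v, ∃ C, ∀ᶠ a in (U : Filter α), s a v ≤ C) :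
    ∃ S : Seminorm ℝ V, ∀ v, Tendsto (s · v) U (𝓝 (S v)) := by
  refine exists_seminorm_of_tendsto fun v => ?_
  obtain ⟨C, hC⟩ := h v
  obtain ⟨L, -, hL⟩ := exists_tendsto_of_eventually_mem_Icc U
    (hC.mono fun a ha => ⟨apply_nonneg (s a) v, ha⟩)
  exact ⟨L, hL⟩

end SeminormLimits

section FiniteDimensional

variable {ι α : Type*} [Fintype ι]

theorem seminorm_le_sum_single_mul_norm [DecidableEq ι] (s : Seminorm ℝ (ι → ℝ)) (c : ι → ℝ) :
    s c ≤ (∑ j, s (Pi.single j 1)) * ‖c‖ := by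
  calc s c = s (∑ j, c j • Pi.single j 1) := by rw [← pi_eq_sum_univ' c]
    _ ≤ ∑ j, s (c j • Pi.single j 1) :=
      le_sum_of_subadditive s (map_zero s).le (map_add_le_add s) _ _
    _ ≤ ∑ j, s (Pi.single j 1) * ‖c‖ := sum_le_sum fun j _ => by
      rw [map_smul_eq_mul, mul_comm]
      exact mul_le_mul_of_nonneg_left (norm_le_pi_norm c j) (apply_nonneg _ _)
    _ = _ := (sum_mul ..).symm

variable {l : Filter α} {s : α → Seminorm ℝ (ι → ℝ)} {S : Seminorm ℝ (ι → ℝ)}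

theorem tendstoUniformlyOn_sphere_of_tendsto (h : ∀ c, Tendsto (s · c) l (𝓝 (S c))) :
    TendstoUniformlyOn (fun a c => s a c) S l (Metric.sphere 0 1) := by
  classical
  rw [Metric.tendstoUniformlyOn_iff]
  intro η hη
  set C : ℝ := ∑ j, S (Pi.single j 1)
  have hC : 0 ≤ C := sum_nonneg fun _ _ => apply_nonneg _ _
  have hr : 0 < η / (3 * (C + 1)) := by positivity
  have hCr : (C + 1) * (η / (3 * (C + 1))) = η / 3 := by field_simp
  obtain ⟨t, -, ht, hcover⟩ := (isCompact_sphere (0 : ι → ℝ) 1).finite_cover_balls hr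
  have hlip : ∀ᶠ a in l, ∑ j, s a (Pi.single j 1) < C + 1 :=
    (tendsto_finsetSum _ fun j _ => h _).eventually_lt_const (lt_add_one C)
  have hnet : ∀ᶠ a in l, ∀ d ∈ t, |S d - s a d| < η / 3 :=
    (eventually_all_finite ht).2 fun d _ =>
      (tendsto_const_nhds.sub (h d)).abs.eventually_lt_const (by simp [hη])
  filter_upwards [hlip, hnet] with a hlipa hneta c hc
  obtain ⟨d, hd, hcd⟩ := Set.mem_iUnion₂.1 (hcover hc)
  have hclose (p : Seminorm ℝ (ι → ℝ)) (hp : ∑ j, p (Pi.single j 1) ≤ C + 1) :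
      |p c - p d| ≤ η / 3 :=
    calc |p c - p d| ≤ p (c - d) := abs_sub_map_le_sub p c d
      _ ≤ _ := seminorm_le_sum_single_mul_norm p _
      _ ≤ _ := mul_le_mul hp (mem_ball_iff_norm.1 hcd).le (norm_nonneg _) (by positivity)
      _ = η / 3 := hCr
  calc |S c - s a c| = |(S c - S d) + (S d - s a d) - (s a c - s a d)| := by ring_nf
    _ ≤ |S c - S d| + |S d - s a d| + |s a c - s a d| :=
      (abs_sub _ _).trans (add_le_add_left (abs_add_le _ _) _)
    _ < η := by linarith [hclose S (by linarith), hclose (s a) hlipa.le, hneta d hd]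

theorem eventually_abs_sub_le_mul_norm (h : ∀ c, Tendsto (s · c) l (𝓝 (S c))) {η : ℝ}
    (hη : 0 < η) : ∀ᶠ a in l, ∀ c, |s a c - S c| ≤ η * ‖c‖ := by
  filter_upwards [Metric.tendstoUniformlyOn_iff.1 (tendstoUniformlyOn_sphere_of_tendsto h) η hη]
    with a ha c
  obtain rfl | hc := eq_or_ne c 0
  · simp
  have hc' : 0 < ‖c‖ := norm_pos_iff.2 hc
  have hunit := ha (‖c‖⁻¹ • c) (by simp [norm_smul, hc])
  rw [dist_comm, Real.dist_eq, map_smul_eq_mul, map_smul_eq_mul, ← mul_sub, abs_mul, norm_inv,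
    norm_norm, abs_of_pos (inv_pos.2 hc'), inv_mul_lt_iff₀ hc', mul_comm] at hunit
  exact hunit.le

end FiniteDimensional

section EllNorm

theorem sum_rpow_le_rpow_sum {ι : Type*} (s : Finset ι) {f : ι → ℝ} {p : ℝ}
    (hf : ∀ i ∈ s, 0 ≤ f i) (hp : 1 ≤ p) : ∑ i ∈ s, f i ^ p ≤ (∑ i ∈ s, f i) ^ p := by
  classical
  induction s using Finset.induction_on with
  | empty => simp [Real.zero_rpow (by positivity : p ≠ 0)]
  | insert a s ha ih =>
    rw [sum_insert ha, sum_insert ha]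
    have hs : ∀ i ∈ s, 0 ≤ f i := fun i hi => hf i (mem_insert_of_mem hi)
    calc f a ^ p + ∑ i ∈ s, f i ^ p ≤ f a ^ p + (∑ i ∈ s, f i) ^ p := by gcongr; exact ih hs
      _ ≤ _ := Real.add_rpow_le_rpow_add (hf a (mem_insert_self a s)) (sum_nonneg hs) hp

/-- The `ℓ_p^n` norm with `p = 1 / θ`: with the parameter `θ ∈ [0, 1]` the exponents form a
compact interval on which the norm is continuous, and `θ = 0` is the sup-norm. -/
noncomputable def ellNorm {n : ℕ} (θ : ℝ) (c : Fin n → ℝ) : ℝ :=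
  lpNorm (ENNReal.ofReal θ)⁻¹ c

variable {n : ℕ} {θ θ' : ℝ}

theorem ellNorm_zero (c : Fin n → ℝ) : ellNorm 0 c = ‖c‖ := by
  have hbdd : BddAbove (Set.range fun i => |c i|) := (Set.finite_range _).bddAbove
  simp only [ellNorm, lpNorm, ENNReal.ofReal_zero, ENNReal.inv_zero, if_true]
  refine le_antisymm (Real.iSup_le (norm_le_pi_norm c) (norm_nonneg c)) ?_
  exact (pi_norm_le_iff_of_nonneg (Real.iSup_nonneg fun i => abs_nonneg (c i))).2 (le_ciSup hbdd)

theorem ellNorm_of_pos (hθ : 0 < θ) (c : Fin n → ℝ) :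
    ellNorm θ c = (∑ i, |c i| ^ (1 / θ)) ^ θ := by
  have htop : (ENNReal.ofReal θ)⁻¹ ≠ ∞ := by simpa using hθ
  simp only [ellNorm, lpNorm, if_neg htop, ENNReal.toReal_inv, ENNReal.toReal_ofReal hθ.le,
    one_div, inv_inv]

theorem ellNorm_nonneg (θ : ℝ) (c : Fin n → ℝ) : 0 ≤ ellNorm θ c := by
  unfold ellNorm lpNorm
  split_ifs
  · exact Real.iSup_nonneg fun i => abs_nonneg (c i)
  · positivity

theorem ellNorm_mono_of_pos (hθ' : 0 < θ') (h : θ' ≤ θ) (c : Fin n → ℝ) :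
    ellNorm θ' c ≤ ellNorm θ c := by
  have hθ : 0 < θ := hθ'.trans_le h
  have hpow (i : Fin n) : |c i| ^ (1 / θ') = (|c i| ^ (1 / θ)) ^ (θ / θ') := by
    rw [← Real.rpow_mul (abs_nonneg _)]; congr 1; field_simp
  rw [ellNorm_of_pos hθ', ellNorm_of_pos hθ]
  calc (∑ i, |c i| ^ (1 / θ')) ^ θ' ≤ ((∑ i, |c i| ^ (1 / θ)) ^ (θ / θ')) ^ θ' := by
        simp only [hpow]
        exact Real.rpow_le_rpow (sum_nonneg fun _ _ => by positivity)
          (sum_rpow_le_rpow_sum _ (fun _ _ => by positivity) ((one_le_div hθ').2 h)) hθ'.le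
    _ = _ := by
      rw [← Real.rpow_mul (sum_nonneg fun _ _ => by positivity), div_mul_cancel₀ _ hθ'.ne']

theorem norm_le_ellNorm (hθ : 0 ≤ θ) (c : Fin n → ℝ) : ‖c‖ ≤ ellNorm θ c := by
  obtain rfl | hθ := hθ.eq_or_lt
  · rw [ellNorm_zero]
  refine (pi_norm_le_iff_of_nonneg (ellNorm_nonneg _ _)).2 fun i => ?_
  calc ‖c i‖ = (|c i| ^ (1 / θ)) ^ θ := by
        rw [← Real.rpow_mul (abs_nonneg _), one_div_mul_cancel hθ.ne', Real.rpow_one,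
          Real.norm_eq_abs]
    _ ≤ ellNorm θ c := by
      rw [ellNorm_of_pos hθ]
      refine Real.rpow_le_rpow (by positivity) ?_ hθ.le
      exact single_le_sum (f := fun i => |c i| ^ (1 / θ)) (fun _ _ => by positivity)
        (mem_univ i)

theorem ellNorm_mono (hθ' : 0 ≤ θ') (h : θ' ≤ θ) (c : Fin n → ℝ) :
    ellNorm θ' c ≤ ellNorm θ c := by
  obtain rfl | hθ' := hθ'.eq_or_lt
  · exact (ellNorm_zero c).trans_le (norm_le_ellNorm h c)
  · exact ellNorm_mono_of_pos hθ' h c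

theorem ellNorm_le_rpow_mul_norm (hθ : 0 ≤ θ) (c : Fin n → ℝ) :
    ellNorm θ c ≤ (n : ℝ) ^ θ * ‖c‖ := by
  obtain rfl | hθ := hθ.eq_or_lt
  · simp [ellNorm_zero]
  calc ellNorm θ c ≤ (∑ _i : Fin n, ‖c‖ ^ (1 / θ)) ^ θ := by
        rw [ellNorm_of_pos hθ]
        gcongr with i
        exact norm_le_pi_norm c i
    _ = _ := by
      rw [sum_const, card_univ, Fintype.card_fin, nsmul_eq_mul,
        Real.mul_rpow n.cast_nonneg (by positivity), ← Real.rpow_mul (norm_nonneg _),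
        one_div_mul_cancel hθ.ne', Real.rpow_one]

theorem ellNorm_le_rpow_mul (hθ' : 0 ≤ θ') (h : θ' ≤ θ) (c : Fin n → ℝ) :
    ellNorm θ c ≤ (n : ℝ) ^ (θ - θ') * ellNorm θ' c := by
  obtain rfl | hθ' := hθ'.eq_or_lt
  · simpa [ellNorm_zero] using ellNorm_le_rpow_mul_norm h c
  have hθ : 0 < θ := hθ'.trans_le h
  have hpow (i : Fin n) : |(|c i| ^ (1 / θ))| ^ (θ / θ') = |c i| ^ (1 / θ') := by
    rw [abs_of_nonneg (by positivity), ← Real.rpow_mul (abs_nonneg _)]; congr 1; field_simp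
  have hmean := Real.rpow_sum_le_const_mul_sum_rpow univ (fun i => |c i| ^ (1 / θ))
    ((one_le_div hθ').2 h)
  simp only [hpow, card_univ, Fintype.card_fin] at hmean
  rw [ellNorm_of_pos hθ, ellNorm_of_pos hθ']
  calc (∑ i, |c i| ^ (1 / θ)) ^ θ = ((∑ i, |(|c i| ^ (1 / θ))|) ^ (θ / θ')) ^ θ' := by
        simp only [abs_of_nonneg (Real.rpow_nonneg (abs_nonneg _) _)]
        rw [← Real.rpow_mul (sum_nonneg fun _ _ => by positivity), div_mul_cancel₀ _ hθ'.ne']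
    _ ≤ ((n : ℝ) ^ (θ / θ' - 1) * ∑ i, |c i| ^ (1 / θ')) ^ θ' := by gcongr
    _ = _ := by
      rw [Real.mul_rpow (by positivity) (sum_nonneg fun _ _ => by positivity),
        ← Real.rpow_mul n.cast_nonneg, sub_mul, div_mul_cancel₀ _ hθ'.ne', one_mul]

theorem exists_nat_rpow_one_div_le (n : ℕ) {η : ℝ} (hη : 0 < η) :
    ∃ D : ℕ, 0 < D ∧ ((n : ℝ) + 1) ^ (1 / (D : ℝ)) ≤ 1 + η := by
  have hlim : Tendsto (fun D : ℕ => ((n : ℝ) + 1) ^ (1 / (D : ℝ))) atTop (𝓝 1) := by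
    simpa [Function.comp_def] using
      (Real.continuousAt_const_rpow (a := (n : ℝ) + 1) (b := 0) (by positivity)).tendsto.comp
        tendsto_one_div_atTop_nhds_zero_nat
  obtain ⟨D, hD, hpos⟩ := ((hlim.eventually_le_const (lt_add_of_pos_right 1 hη)).and
    (eventually_gt_atTop 0)).exists
  exact ⟨D, hpos, hD⟩

theorem exists_finset_ellNorm_net (n : ℕ) {η : ℝ} (hη : 0 < η) :
    ∃ T : Finset ℝ, (∀ θ ∈ T, θ ∈ Set.Icc 0 1) ∧ ∀ θ ∈ Set.Icc (0 : ℝ) 1, ∃ θ' ∈ T,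
      ∀ c : Fin n → ℝ, ellNorm θ' c ≤ ellNorm θ c ∧ ellNorm θ c ≤ (1 + η) * ellNorm θ' c := by
  obtain ⟨D, hD0, hD⟩ := exists_nat_rpow_one_div_le n hη
  have hDr : (0 : ℝ) < D := by exact_mod_cast hD0
  refine ⟨(range (D + 1)).image fun i : ℕ => (i : ℝ) / D, fun θ hθ => ?_, fun θ hθ => ?_⟩
  · obtain ⟨i, hi, rfl⟩ := mem_image.1 hθ
    refine ⟨by positivity, (div_le_one hDr).2 ?_⟩
    exact_mod_cast mem_range_succ_iff.1 hi
  have hfloor : (⌊θ * D⌋₊ : ℝ) ≤ θ * D := Nat.floor_le (mul_nonneg hθ.1 hDr.le)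
  have hle : (⌊θ * D⌋₊ : ℝ) / D ≤ θ := (div_le_iff₀ hDr).2 hfloor
  have hsub : θ - (⌊θ * D⌋₊ : ℝ) / D ≤ 1 / D := by
    rw [sub_le_iff_le_add, ← add_div, le_div_iff₀ hDr, add_comm]
    exact (Nat.lt_floor_add_one _).le
  refine ⟨(⌊θ * D⌋₊ : ℝ) / D, mem_image.2 ⟨_, mem_range_succ_iff.2 ?_, rfl⟩, fun c =>
    ⟨ellNorm_mono (by positivity) hle c, (ellNorm_le_rpow_mul (by positivity) hle c).trans ?_⟩⟩
  · exact_mod_cast hfloor.trans (mul_le_of_le_one_left hDr.le hθ.2)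
  refine mul_le_mul_of_nonneg_right ?_ (ellNorm_nonneg _ _)
  calc (n : ℝ) ^ (θ - (⌊θ * D⌋₊ : ℝ) / D) ≤ ((n : ℝ) + 1) ^ (θ - (⌊θ * D⌋₊ : ℝ) / D) :=
        Real.rpow_le_rpow n.cast_nonneg (by linarith) (by linarith)
    _ ≤ ((n : ℝ) + 1) ^ (1 / (D : ℝ)) :=
      Real.rpow_le_rpow_of_exponent_le (le_add_of_nonneg_left n.cast_nonneg) hsub
    _ ≤ 1 + η := hD

end EllNorm

section BlockSequences

variable {ι κ α : Type*} [LinearOrder ι] [LinearOrder κ]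

/-- The invariance satisfied by spreading models: the seminorm of a combination of basis vectors
depends only on its nonzero coefficients and their order, not on their positions. -/
def IsSpreading (M : Seminorm ℝ (ι →₀ ℝ)) : Prop :=
  ∀ (f : ι →₀ ℝ) (g : ι → ι), StrictMonoOn g f.support → M (f.mapDomain g) = M f

/-- Successive finitely supported vectors: the blocks of a block basis, not assumed to be
nonzero. -/
def IsBlockSequence {n : ℕ} (y : Fin n → ι →₀ ℝ) : Prop :=
  ∀ j j', j < j' → ∀ a ∈ (y j).support, ∀ b ∈ (y j').support, a < b

/-- `ℓ_{1/θ}` is block finitely representable in the basis of unit vectors under `M`. -/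
def BlockRepresents (M : Seminorm ℝ (ι →₀ ℝ)) (θ : ℝ) : Prop :=
  ∀ (n : ℕ) (η : ℝ), 0 < η → ∃ y : Fin n → ι →₀ ℝ, IsBlockSequence y ∧
    ∀ c : Fin n → ℝ, |M (∑ j, c j • y j) - ellNorm θ c| ≤ η * ellNorm θ c

variable {M : Seminorm ℝ (ι →₀ ℝ)} {θ : ℝ}

theorem IsBlockSequence.mapDomain {n : ℕ} {y : Fin n → ι →₀ ℝ} (hy : IsBlockSequence y)
    {g : ι → κ} (hg : StrictMonoOn g (⋃ j, ((y j).support : Set ι))) :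
    IsBlockSequence fun j => (y j).mapDomain g := by
  classical
  intro j j' hjj' a ha b hb
  obtain ⟨a', ha', rfl⟩ := mem_image.1 (Finsupp.mapDomain_support ha)
  obtain ⟨b', hb', rfl⟩ := mem_image.1 (Finsupp.mapDomain_support hb)
  exact hg (Set.mem_iUnion.2 ⟨j, ha'⟩) (Set.mem_iUnion.2 ⟨j', hb'⟩) (hy j j' hjj' a' ha' b' hb')

theorem BlockRepresents.exists_eventually {W : Filter α} {s : α → Seminorm ℝ (ι →₀ ℝ)}
    (hM : BlockRepresents M θ) (hθ : 0 ≤ θ) (h : ∀ f, Tendsto (s · f) W (𝓝 (M f)))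
    (n : ℕ) {η : ℝ} (hη : 0 < η) : ∃ y : Fin n → ι →₀ ℝ, IsBlockSequence y ∧
      ∀ᶠ a in W, ∀ c : Fin n → ℝ, |s a (∑ j, c j • y j) - ellNorm θ c| ≤ η * ellNorm θ c := by
  obtain ⟨y, hy, hyc⟩ := hM n (η / 2) (half_pos hη)
  have hlim := eventually_abs_sub_le_mul_norm
    (s := fun a => (s a).comp (Fintype.linearCombination ℝ y))
    (S := M.comp (Fintype.linearCombination ℝ y)) (fun c => h _) (half_pos hη)
  refine ⟨y, hy, hlim.mono fun a ha c => ?_⟩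
  simp only [Seminorm.comp_apply, Fintype.linearCombination_apply] at ha
  calc |s a (∑ j, c j • y j) - ellNorm θ c|
      ≤ |s a (∑ j, c j • y j) - M (∑ j, c j • y j)| + |M (∑ j, c j • y j) - ellNorm θ c| :=
        abs_sub_le _ _ _
    _ ≤ η / 2 * ellNorm θ c + η / 2 * ellNorm θ c := by
        gcongr
        · exact (ha c).trans (mul_le_mul_of_nonneg_left (norm_le_ellNorm hθ c) (half_pos hη).le)
        · exact hyc c
    _ = η * ellNorm θ c := by ring

theorem BlockRepresents.of_tendsto_comp {W : Filter α} [W.NeBot] {N : Seminorm ℝ (κ →₀ ℝ)}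
    {Φ : α → (ι →₀ ℝ) →ₗ[ℝ] (κ →₀ ℝ)} (hM : BlockRepresents M θ) (hθ : 0 ≤ θ)
    (hlim : ∀ f, Tendsto (fun a => N (Φ a f)) W (𝓝 (M f)))
    (hΦ : ∀ {n : ℕ} (y : Fin n → ι →₀ ℝ), IsBlockSequence y →
      ∀ᶠ a in W, IsBlockSequence fun j => Φ a (y j)) :
    BlockRepresents N θ := by
  intro n η hη
  obtain ⟨y, hy, hyN⟩ := hM.exists_eventually (s := fun a => N.comp (Φ a)) hθ hlim n hη
  obtain ⟨a, haN, ha⟩ := (hyN.and (hΦ y hy)).exists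
  exact ⟨fun j => Φ a (y j), ha, by simpa using haN⟩

theorem BlockRepresents.of_comp {N : Seminorm ℝ (κ →₀ ℝ)} {Φ : (ι →₀ ℝ) →ₗ[ℝ] (κ →₀ ℝ)}
    (h : BlockRepresents (N.comp Φ) θ)
    (hΦ : ∀ {n : ℕ} (y : Fin n → ι →₀ ℝ), IsBlockSequence y → IsBlockSequence fun j => Φ (y j)) :
    BlockRepresents N θ := by
  intro n η hη
  obtain ⟨y, hy, hyc⟩ := h n η hη
  exact ⟨fun j => Φ (y j), hΦ y hy, by simpa using hyc⟩

end BlockSequences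

section SpreadingModel

variable {κ : Type*} {U : Ultrafilter ℕ} {N : Seminorm ℝ (ℕ →₀ ℝ)} {C : ℝ}

/-- The iterated limit, along positions `i₁, i₂, …` chosen one after the other, of
`N (v + a₁ e_{i₁} + a₂ e_{i₂} + ⋯)`. -/
noncomputable def iteratedLimit (U : Ultrafilter ℕ) (N : Seminorm ℝ (ℕ →₀ ℝ)) :
    List ℝ → (ℕ →₀ ℝ) → ℝ
  | [], v => N v
  | a :: l, v => limUnder (U : Filter ℕ) fun i => iteratedLimit U N l (v + Finsupp.single i a)

theorem seminorm_add_single_le {ι : Type*} {N : Seminorm ℝ (ι →₀ ℝ)} {i : ι}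
    (hN : N (Finsupp.single i 1) ≤ C) (v : ι →₀ ℝ) (a : ℝ) :
    N (v + Finsupp.single i a) ≤ N v + C * |a| := by
  calc N (v + Finsupp.single i a) ≤ N v + N (a • Finsupp.single i 1) := by
        simpa using map_add_le_add N v (Finsupp.single i a)
    _ ≤ N v + C * |a| := by
        rw [map_smul_eq_mul, Real.norm_eq_abs, mul_comm]
        gcongr

theorem tendsto_iteratedLimit_of_mem_Icc {a b : ℝ} (l : List ℝ) (v : ℕ →₀ ℝ) (x : ℝ)
    (h : ∀ i, iteratedLimit U N l (v + Finsupp.single i x) ∈ Set.Icc a b) :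
    Tendsto (fun i => iteratedLimit U N l (v + Finsupp.single i x)) U
      (𝓝 (iteratedLimit U N (x :: l) v)) := by
  obtain ⟨L, -, hL⟩ := exists_tendsto_of_eventually_mem_Icc U (Eventually.of_forall h)
  exact tendsto_nhds_limUnder ⟨L, hL⟩

theorem iteratedLimit_mem_Icc (hN : ∀ i, N (Finsupp.single i 1) ≤ C) (l : List ℝ) (v : ℕ →₀ ℝ) :
    iteratedLimit U N l v ∈ Set.Icc 0 (N v + C * (l.map (|·|)).sum) := by
  induction l generalizing v with
  | nil => simp [iteratedLimit]
  | cons a l ih =>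
    have hmem (i : ℕ) : iteratedLimit U N l (v + Finsupp.single i a) ∈
        Set.Icc 0 (N v + C * ((a :: l).map (|·|)).sum) := by
      refine ⟨(ih _).1, (ih _).2.trans ?_⟩
      rw [List.map_cons, List.sum_cons, mul_add, ← add_assoc]
      gcongr
      exact seminorm_add_single_le (hN i) v a
    exact isClosed_Icc.mem_of_tendsto (tendsto_iteratedLimit_of_mem_Icc l v a hmem)
      (Eventually.of_forall hmem)

theorem tendsto_iteratedLimit (hN : ∀ i, N (Finsupp.single i 1) ≤ C) (a : ℝ) (l : List ℝ)
    (v : ℕ →₀ ℝ) :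
    Tendsto (fun i => iteratedLimit U N l (v + Finsupp.single i a)) U
      (𝓝 (iteratedLimit U N (a :: l) v)) :=
  tendsto_iteratedLimit_of_mem_Icc (b := N v + C * |a| + C * (l.map (|·|)).sum) l v a fun i =>
    ⟨(iteratedLimit_mem_Icc hN l _).1, (iteratedLimit_mem_Icc hN l _).2.trans
      (add_le_add_left (seminorm_add_single_le (hN i) v a) _)⟩

theorem iteratedLimit_filter_ne_zero (hN : ∀ i, N (Finsupp.single i 1) ≤ C) (l : List ℝ)
    (v : ℕ →₀ ℝ) : iteratedLimit U N (l.filter (· ≠ 0)) v = iteratedLimit U N l v := by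
  induction l generalizing v with
  | nil => simp
  | cons a l ih =>
    refine tendsto_nhds_unique ?_ (tendsto_iteratedLimit hN a l v)
    simp only [← ih]
    obtain rfl | ha := eq_or_ne a 0
    · simp
    · rw [List.filter_cons_of_pos (by simpa using ha)]
      exact tendsto_iteratedLimit hN a _ v

theorem neBot_bind {α β : Type*} {f : Filter α} [f.NeBot] {m : α → Filter β}
    (hm : ∀ a, (m a).NeBot) : (f.bind m).NeBot := by
  rw [← frequently_true_iff_neBot, frequently_bind]
  exact (Eventually.of_forall fun a => frequently_true_iff_neBot _ |>.2 (hm a)).frequently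

/-- The filter of maps `g` whose values at the entries `r₁, r₂, …` of a list are chosen one after
the other along `U`; the values at other points are irrelevant. -/
def positionsOn [DecidableEq κ] (U : Ultrafilter ℕ) : List κ → Filter (κ → ℕ)
  | [] => pure fun _ => 0
  | r :: l => (U : Filter ℕ).bind fun i => (positionsOn U l).map fun g => Function.update g r i

theorem positionsOn_neBot [DecidableEq κ] (l : List κ) : (positionsOn U l).NeBot := by
  induction l with
  | nil => exact pure_neBot
  | cons r l ih => exact neBot_bind fun i => ih.map _

theorem tendsto_positionsOn [DecidableEq κ] (hN : ∀ i, N (Finsupp.single i 1) ≤ C) {l : List κ}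
    (hl : l.Nodup) (f : κ → ℝ) (v : ℕ →₀ ℝ) :
    Tendsto (fun g : κ → ℕ => N (v + (l.map fun r => Finsupp.single (g r) (f r)).sum))
      (positionsOn U l) (𝓝 (iteratedLimit U N (l.map f) v)) := by
  induction l generalizing v with
  | nil => simp [positionsOn, iteratedLimit]
  | cons r l ih =>
    obtain ⟨hr, hl⟩ := List.nodup_cons.1 hl
    refine tendsto_nhds.2 fun O hO hmem => ?_
    refine eventually_bind.2 ?_
    filter_upwards [tendsto_iteratedLimit hN (f r) (l.map f) v (hO.mem_nhds hmem)] with i hi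
    refine eventually_map.2 ?_
    filter_upwards [ih hl (v + Finsupp.single i (f r)) (hO.mem_nhds hi)] with g hg
    have hupdate : l.map (fun r' => Finsupp.single (Function.update g r i r') (f r')) =
        l.map fun r' => Finsupp.single (g r') (f r') :=
      List.map_congr_left fun r' hr' => by
        rw [Function.update_of_ne (ne_of_mem_of_not_mem hr' hr)]
    simpa only [Set.mem_preimage, List.map_cons, List.sum_cons, Function.update_self, hupdate,
      ← add_assoc] using hg

variable [LinearOrder κ]

theorem eventually_strictMonoOn_positionsOn {l : List κ} (hl : l.Pairwise (· < ·)) (b : ℕ) :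
    ∀ᶠ g in positionsOn (hyperfilter ℕ) l, (∀ r ∈ l, b ≤ g r) ∧ StrictMonoOn g {r | r ∈ l} := by
  induction l generalizing b with
  | nil => exact Eventually.of_forall fun g => by simp [StrictMonoOn]
  | cons r l ih =>
    obtain ⟨hr, hl⟩ := List.pairwise_cons.1 hl
    refine eventually_bind.2 ?_
    filter_upwards [Nat.hyperfilter_le_atTop (eventually_ge_atTop b)] with i hi
    refine eventually_map.2 ((ih hl (i + 1)).mono fun g ⟨hgb, hg⟩ => ?_)
    have hupdate : Set.EqOn (Function.update g r i) g {r' | r' ∈ l} := fun r' hr' =>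
      Function.update_of_ne (hr r' hr').ne' _ _
    have hset : {r' | r' ∈ r :: l} = insert r {r' | r' ∈ l} := by ext; simp
    rw [hset, strictMonoOn_insert_iff, List.forall_mem_cons, Function.update_self]
    refine ⟨⟨hi, fun r' hr' => ?_⟩, fun r' hr' h => ?_, fun r' hr' _ => ?_,
      hg.congr hupdate.symm⟩
    · rw [hupdate hr']
      exact (Nat.le_succ_of_le hi).trans (hgb r' hr')
    · exact absurd (hr r' hr') h.not_gt
    · rw [hupdate hr']
      exact hgb r' hr'

theorem finset_sort_image_of_strictMonoOn {s : Finset κ} {g : κ → κ} (hg : StrictMonoOn g s) :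
    (s.image g).sort = s.sort.map g := by
  have hnodup : (s.sort.map g).Nodup :=
    (sort_nodup s _).map_on fun a ha b hb => hg.injOn (by simpa using ha) (by simpa using hb)
  rw [← (List.toFinset_sort (· ≤ ·) hnodup).2]
  · congr 1; ext; simp
  · refine List.pairwise_map.2 ((pairwise_sort s _).imp_of_mem fun ha hb hab => ?_)
    exact hg.monotoneOn (by simpa using ha) (by simpa using hb) hab

theorem finset_sort_filter (s : Finset κ) (p : κ → Prop) [DecidablePred p] :
    (s.filter p).sort = s.sort.filter p := by
  rw [← (List.toFinset_sort _ ((sort_nodup s _).filter _)).2 ((pairwise_sort s _).filter _)]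
  congr 1; ext; simp

theorem iteratedLimit_sort_map_eq (hN : ∀ i, N (Finsupp.single i 1) ≤ C) (f : κ →₀ ℝ)
    {s : Finset κ} (hs : f.support ⊆ s) (v : ℕ →₀ ℝ) :
    iteratedLimit U N (s.sort.map f) v = iteratedLimit U N (f.support.sort.map f) v := by
  have hsupp : f.support = s.filter fun r => f r ≠ 0 := by
    ext r
    simpa using fun h => hs (Finsupp.mem_support_iff.2 h)
  rw [← iteratedLimit_filter_ne_zero hN, List.filter_map, hsupp, finset_sort_filter]
  rfl

/-- Positions of the spreading model: on every finite set `s` they are eventually increasing and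
chosen one after the other along the ultrafilter `U`. -/
def positions (U : Ultrafilter ℕ) : Filter (κ → ℕ) :=
  (atTop : Filter (Finset κ)).bind fun s => positionsOn U s.sort

theorem tendsto_positions (hN : ∀ i, N (Finsupp.single i 1) ≤ C) (f : κ →₀ ℝ) :
    Tendsto (fun g : κ → ℕ => N (f.mapDomain g)) (positions U)
      (𝓝 (iteratedLimit U N (f.support.sort.map f) 0)) := by
  intro O hO
  refine eventually_bind.2 ((eventually_ge_atTop f.support).mono fun s hs => ?_)
  have hsum (g : κ → ℕ) :
      f.mapDomain g = 0 + (s.sort.map fun r => Finsupp.single (g r) (f r)).sum := by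
    rw [zero_add, ← List.sum_toFinset _ (sort_nodup s _), sort_toFinset, Finsupp.mapDomain,
      Finsupp.sum_of_support_subset f hs _ (by simp)]
  rw [← iteratedLimit_sort_map_eq hN f hs] at hO
  filter_upwards [tendsto_positionsOn hN (sort_nodup s _) f 0 hO] with g hg
  simpa only [Set.mem_preimage, hsum] using hg

theorem exists_spreading_model (hN : ∀ i, N (Finsupp.single i 1) ≤ C) :
    ∃ (F : Seminorm ℝ (κ →₀ ℝ)) (W : Filter (κ → ℕ)), W.NeBot ∧ IsSpreading F ∧
      (∀ s : Finset κ, ∀ᶠ g in W, StrictMonoOn g s) ∧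
      ∀ f, Tendsto (fun g => N (f.mapDomain g)) W (𝓝 (F f)) := by
  let W : Filter (κ → ℕ) := positions (hyperfilter ℕ)
  have hW : W.NeBot := neBot_bind fun s => positionsOn_neBot _
  have hlim := tendsto_positions (κ := κ) (U := hyperfilter ℕ) hN
  obtain ⟨F, hF⟩ := exists_seminorm_of_tendsto (s := fun g => N.comp (Finsupp.lmapDomain ℝ ℝ g))
    (l := W) fun f => ⟨_, hlim f⟩
  have hFval (f) : F f = iteratedLimit (hyperfilter ℕ) N (f.support.sort.map f) 0 :=
    tendsto_nhds_unique (hF f) (hlim f)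
  refine ⟨F, W, hW, fun f g hg => ?_, fun s => ?_, hF⟩
  · rw [hFval, hFval, Finsupp.mapDomain_support_of_injOn f hg.injOn,
      finset_sort_image_of_strictMonoOn hg, List.map_map]
    congr 1
    refine List.map_congr_left fun r hr => ?_
    exact Finsupp.mapDomain_apply' _ f subset_rfl hg.injOn (by simpa using hr)
  · refine eventually_bind.2 ((eventually_ge_atTop s).mono fun t ht => ?_)
    filter_upwards [eventually_strictMonoOn_positionsOn (sortedLT_sort t).pairwise 0] with g hg
    exact hg.2.mono fun r hr => by simpa using ht hr

end SpreadingModel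

section BlockMap

variable {ι κ : Type*}

/-- The linear map replacing each unit vector `e_r` by a copy of `z` supported in the fibre
`{r} × κ` of the lexicographic product. -/
noncomputable def blockMap (z : κ →₀ ℝ) : (ι →₀ ℝ) →ₗ[ℝ] (ι ×ₗ κ →₀ ℝ) :=
  Finsupp.linearCombination ℝ fun r => z.mapDomain fun i => toLex (r, i)

theorem blockMap_single (z : κ →₀ ℝ) (r : ι) (a : ℝ) :
    blockMap z (Finsupp.single r a) = a • z.mapDomain fun i => toLex (r, i) :=
  Finsupp.linearCombination_single ..

theorem blockMap_single_right (i : κ) (a : ℝ) (r : ι) (b : ℝ) :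
    blockMap (Finsupp.single i a) (Finsupp.single r b) = Finsupp.single (toLex (r, i)) (b * a) := by
  simp [blockMap_single]

theorem blockMap_apply (z : κ →₀ ℝ) (f : ι →₀ ℝ) (p : ι ×ₗ κ) :
    blockMap z f p = f (ofLex p).1 * z (ofLex p).2 := by
  classical
  induction f using Finsupp.induction_linear with
  | zero => simp
  | add f g hf hg => rw [map_add, Finsupp.add_apply, hf, hg, Finsupp.add_apply, add_mul]
  | single r a =>
    rw [blockMap_single, Finsupp.smul_apply, smul_eq_mul, Finsupp.single_apply]
    split_ifs with h
    · subst h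
      exact congrArg (a * ·) <| Finsupp.mapDomain_apply
        (fun i j hij => (Prod.mk.inj (toLex.injective hij)).2) z (ofLex p).2
    · rw [Finsupp.mapDomain_of_notMem_range, mul_zero, zero_mul]
      rintro ⟨j, rfl⟩
      exact h rfl

theorem blockMap_add_left (z w : κ →₀ ℝ) (f : ι →₀ ℝ) :
    blockMap (z + w) f = blockMap z f + blockMap w f := by
  ext p
  simp only [Finsupp.add_apply, blockMap_apply, mul_add]

theorem fst_mem_support_of_mem_support_blockMap {z : κ →₀ ℝ} {f : ι →₀ ℝ} {p : ι ×ₗ κ}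
    (hp : p ∈ (blockMap z f).support) : (ofLex p).1 ∈ f.support := by
  rw [Finsupp.mem_support_iff, blockMap_apply] at hp
  exact Finsupp.mem_support_iff.2 (left_ne_zero_of_mul hp)

theorem blockMap_mapDomain_right (z : κ →₀ ℝ) (f : ι →₀ ℝ) (g : ι → ι) :
    blockMap z (f.mapDomain g) =
      (blockMap z f).mapDomain fun p => toLex (g (ofLex p).1, (ofLex p).2) := by
  induction f using Finsupp.induction_linear with
  | zero => simp
  | add f f' hf hf' => simp only [map_add, Finsupp.mapDomain_add, hf, hf']
  | single r a =>
    rw [Finsupp.mapDomain_single, blockMap_single, blockMap_single, Finsupp.mapDomain_smul,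
      ← Finsupp.mapDomain_comp]
    rfl

variable [LinearOrder ι]

/-- The self-map of the lexicographic product acting as `g` on the fibre over `r` and trivially on
the other fibres. -/
def moveFibre (r : ι) (g : κ → κ) (p : ι ×ₗ κ) : ι ×ₗ κ :=
  if (ofLex p).1 = r then toLex (r, g (ofLex p).2) else p

theorem ofLex_moveFibre_fst (r : ι) (g : κ → κ) (p : ι ×ₗ κ) :
    (ofLex (moveFibre r g p)).1 = (ofLex p).1 := by
  unfold moveFibre
  split_ifs with h
  · exact h.symm
  · rfl

variable [LinearOrder κ] {M : Seminorm ℝ (ι ×ₗ κ →₀ ℝ)}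

theorem IsBlockSequence.map_blockMap {n : ℕ} {y : Fin n → ι →₀ ℝ} (hy : IsBlockSequence y)
    (z : κ →₀ ℝ) : IsBlockSequence fun j => blockMap z (y j) := fun j j' hjj' _ ha _ hb =>
  Prod.Lex.lt_iff.2 <| Or.inl <| hy j j' hjj' _ (fst_mem_support_of_mem_support_blockMap ha) _
    (fst_mem_support_of_mem_support_blockMap hb)

theorem IsSpreading.comp_blockMap (hM : IsSpreading M) (z : κ →₀ ℝ) :
    IsSpreading (M.comp (blockMap z)) := by
  intro f g hg
  rw [Seminorm.comp_apply, blockMap_mapDomain_right, hM, Seminorm.comp_apply]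
  intro p hp q hq hpq
  rcases Prod.Lex.lt_iff.1 hpq with h | ⟨h, h'⟩
  · exact Prod.Lex.toLex_lt_toLex.2 <| Or.inl <| hg (fst_mem_support_of_mem_support_blockMap hp)
      (fst_mem_support_of_mem_support_blockMap hq) h
  · exact Prod.Lex.toLex_lt_toLex.2 <| Or.inr ⟨congrArg g h, h'⟩

theorem strictMono_moveFibre (r : ι) {g : κ → κ} (hg : StrictMono g) :
    StrictMono (moveFibre r g) := by
  intro p q hpq
  rw [Prod.Lex.lt_iff, ofLex_moveFibre_fst, ofLex_moveFibre_fst]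
  refine (Prod.Lex.lt_iff.1 hpq).imp_right fun ⟨h, h'⟩ => ⟨h, ?_⟩
  unfold moveFibre
  rw [h]
  split_ifs
  · exact hg h'
  · exact h'

theorem IsSpreading.comp_blockMap_mapDomain (hM : IsSpreading M) {g : κ → κ} (hg : StrictMono g)
    (w z : κ →₀ ℝ) {r : ι} (a : ℝ) {f : ι →₀ ℝ} (hr : f r = 0) :
    M (blockMap (w.mapDomain g) (Finsupp.single r a) + blockMap z f) =
      M (blockMap w (Finsupp.single r a) + blockMap z f) := by
  rw [← hM (blockMap w _ + _) (moveFibre r g) ((strictMono_moveFibre r hg).strictMonoOn _),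
    Finsupp.mapDomain_add]
  congr 2
  · rw [blockMap_single, blockMap_single, Finsupp.mapDomain_smul, ← Finsupp.mapDomain_comp,
      ← Finsupp.mapDomain_comp]
    congr 2
    funext i
    simp [moveFibre]
  · refine Finsupp.mapDomain_id.symm.trans (Finsupp.mapDomain_congr fun p hp => Eq.symm ?_)
    refine if_neg ?_
    rintro rfl
    exact Finsupp.mem_support_iff.1 (fst_mem_support_of_mem_support_blockMap hp) hr

theorem IsSpreading.map_single_eq {M : Seminorm ℝ (ι →₀ ℝ)} (hM : IsSpreading M) (r s : ι)
    (a : ℝ) : M (Finsupp.single r a) = M (Finsupp.single s a) := by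
  rw [← hM _ (fun _ => s), Finsupp.mapDomain_single]
  refine Set.Subsingleton.strictMonoOn _ fun x hx y hy => ?_
  rw [mem_singleton.1 (Finsupp.support_single_subset hx),
    mem_singleton.1 (Finsupp.support_single_subset hy)]

end BlockMap

section Coordinatewise

variable {ι : Type*} {M : Seminorm ℝ (ι →₀ ℝ)}

theorem seminorm_le_of_forall_single_add {R : ℝ → ℝ → Prop} (hR : ∀ a, R a a)
    (h : ∀ r f a b, f r = 0 → R a b →
      M (Finsupp.single r a + f) ≤ M (Finsupp.single r b + f))
    {f g : ι →₀ ℝ} (hfg : ∀ r, R (f r) (g r)) : M f ≤ M g := by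
  classical
  suffices key : ∀ (s : Finset ι) (g : ι →₀ ℝ), (∀ r, R (f r) (g r)) → (∀ r ∉ s, f r = g r) →
      M f ≤ M g by
    refine key (f.support ∪ g.support) g hfg fun r hr => ?_
    simp only [mem_union, Finsupp.mem_support_iff, not_or, not_not] at hr
    rw [hr.1, hr.2]
  intro s
  induction s using Finset.induction_on with
  | empty => exact fun g _ hg => (congrArg M (Finsupp.ext fun r => hg r (notMem_empty r))).le
  | insert r s _ ih =>
    intro g hR' hg
    calc M f ≤ M (g.update r (f r)) := ih _ (fun t => ?_) fun t ht => ?_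
      _ = M (Finsupp.single r (f r) + g.erase r) := by rw [Finsupp.update_eq_single_add_erase]
      _ ≤ M (Finsupp.single r (g r) + g.erase r) := h _ _ _ _ Finsupp.erase_same (hR' r)
      _ = M g := by rw [Finsupp.single_add_erase]
    all_goals
      rw [Finsupp.coe_update, Function.update_apply]
      split_ifs with htr
    · exact htr ▸ hR _
    · exact hR' t
    · rw [htr]
    · exact hg t (by simp [ht, htr])

end Coordinatewise

section DifferenceBlocks

variable {ι E : Type*} [AddCommGroup E] [Module ℝ E]

/-- Deleting coordinates does not increase the seminorm. -/
def IsSuppressionUnconditional (M : Seminorm ℝ (ι →₀ ℝ)) : Prop :=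
  ∀ f g : ι →₀ ℝ, (∀ r, f r = g r ∨ f r = 0) → M f ≤ M g

theorem seminorm_le_add_of_forall_half_le {M : Seminorm ℝ E} {x y : E}
    (h : ∀ t : ℝ, M ((t / 2) • x + y) ≤ M (t • x + y)) : M y ≤ M (x + y) := by
  have hpow (k : ℕ) : M ((1 / 2 : ℝ) ^ k • x + y) ≤ M (x + y) := by
    induction k with
    | zero => simp
    | succ k ih => simpa only [pow_succ, mul_one_div] using (h _).trans ih
  have hle (k : ℕ) : M y ≤ (1 / 2) ^ k * M x + M (x + y) :=
    calc M y = M ((-(1 / 2 : ℝ) ^ k) • x + ((1 / 2 : ℝ) ^ k • x + y)) := by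
          rw [neg_smul, neg_add_cancel_left]
      _ ≤ (1 / 2) ^ k * M x + M (x + y) := by
          refine (map_add_le_add _ _ _).trans (add_le_add (le_of_eq ?_) (hpow k))
          rw [map_smul_eq_mul, norm_neg, Real.norm_of_nonneg (by positivity)]
  have hlim : Tendsto (fun k : ℕ => (1 / 2 : ℝ) ^ k * M x + M (x + y)) atTop
      (𝓝 (0 * M x + M (x + y))) :=
    ((tendsto_pow_atTop_nhds_zero_of_lt_one (by norm_num) (by norm_num)).mul_const _).add_const _
  simpa using ge_of_tendsto' hlim hle

/-- The difference `e₀ - e₁`, whose translates telescope. -/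
noncomputable def diffBlock : ℕ →₀ ℝ := Finsupp.single 0 1 - Finsupp.single 1 1

theorem diffBlock_mapDomain {κ : Type*} (g : ℕ → κ) :
    diffBlock.mapDomain g = Finsupp.single (g 0) 1 - Finsupp.single (g 1) 1 := by
  simp only [diffBlock, sub_eq_add_neg, ← Finsupp.single_neg, Finsupp.mapDomain_add,
    Finsupp.mapDomain_single]

theorem diffBlock_mapDomain_two_mul :
    diffBlock.mapDomain (2 * ·) = diffBlock + diffBlock.mapDomain Nat.succ := by
  rw [diffBlock_mapDomain, diffBlock_mapDomain, diffBlock, sub_add_sub_cancel]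

variable {M : Seminorm ℝ (ι ×ₗ ℕ →₀ ℝ)}

theorem comp_blockMap_diffBlock_single (r : ι) :
    M.comp (blockMap diffBlock) (Finsupp.single r 1) =
      M (Finsupp.single (toLex (r, 0)) 1 - Finsupp.single (toLex (r, 1)) 1) := by
  rw [Seminorm.comp_apply, blockMap_single, one_smul, diffBlock_mapDomain]

variable [LinearOrder ι]

theorem IsSpreading.comp_blockMap_diffBlock_half_le (hM : IsSpreading M) (a : ℝ) {r : ι}
    {f : ι →₀ ℝ} (hr : f r = 0) :
    M (blockMap diffBlock (Finsupp.single r (a / 2)) + blockMap diffBlock f) ≤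
      M (blockMap diffBlock (Finsupp.single r a) + blockMap diffBlock f) := by
  set D := blockMap diffBlock (Finsupp.single r a)
  set D' := blockMap (diffBlock.mapDomain Nat.succ) (Finsupp.single r a)
  set F := blockMap diffBlock f
  have htwo : StrictMono fun i : ℕ => 2 * i := strictMono_mul_left_of_pos two_pos
  have hhalf : Finsupp.single r (a / 2) = (1 / 2 : ℝ) • Finsupp.single r a := by
    rw [Finsupp.smul_single, smul_eq_mul, one_div_mul_eq_div]
  have hmid : blockMap (diffBlock.mapDomain (2 * ·)) (Finsupp.single r (a / 2)) + F =
      (1 / 2 : ℝ) • (D + F) + (1 / 2 : ℝ) • (D' + F) := by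
    rw [diffBlock_mapDomain_two_mul, hhalf, map_smul, blockMap_add_left]
    module
  calc M (blockMap diffBlock (Finsupp.single r (a / 2)) + F)
      = M ((1 / 2 : ℝ) • (D + F) + (1 / 2 : ℝ) • (D' + F)) := by
        rw [← hM.comp_blockMap_mapDomain htwo _ _ _ hr, hmid]
    _ ≤ 1 / 2 * M (D + F) + 1 / 2 * M (D' + F) := by
        refine (map_add_le_add _ _ _).trans_eq ?_
        rw [map_smul_eq_mul, map_smul_eq_mul, Real.norm_of_nonneg (by norm_num)]
    _ = M (D + F) := by
        rw [hM.comp_blockMap_mapDomain (fun _ _ => Nat.succ_lt_succ) _ _ _ hr]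
        ring

theorem IsSpreading.isSuppressionUnconditional_comp_diffBlock (hM : IsSpreading M) :
    IsSuppressionUnconditional (M.comp (blockMap diffBlock)) := by
  intro f g hfg
  refine seminorm_le_of_forall_single_add (R := fun a b => a = b ∨ a = 0) (fun _ => Or.inl rfl)
    ?_ hfg
  rintro r f a b hr (rfl | rfl)
  · exact le_rfl
  rw [Finsupp.single_zero, zero_add]
  refine seminorm_le_add_of_forall_half_le fun t => ?_
  simpa only [Seminorm.comp_apply, map_add, Finsupp.smul_single, smul_eq_mul, div_mul_eq_mul_div]
    using hM.comp_blockMap_diffBlock_half_le (t * b) hr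

end DifferenceBlocks

section AlternatingBlocks

/-- The block `∑ (-1) ^ t e_t` over `k ≤ t < k + n`. -/
noncomputable def altBlock (n k : ℕ) : ℕ →₀ ℝ := ∑ t ∈ Ico k (k + n), Finsupp.single t ((-1) ^ t)

theorem altBlock_apply (n k t : ℕ) :
    altBlock n k t = if t ∈ Ico k (k + n) then (-1) ^ t else 0 := by
  simp only [altBlock, Finsupp.finsetSum_apply, Finsupp.single_apply, sum_ite_eq']

theorem altBlock_mapDomain_succ (n k : ℕ) :
    (altBlock n k).mapDomain Nat.succ = -altBlock n (k + 1) := by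
  rw [altBlock, altBlock, Nat.add_right_comm, ← sum_Ico_add' _ _ _ 1, Finsupp.mapDomain_finsetSum,
    ← sum_neg_distrib]
  refine sum_congr rfl fun t _ => ?_
  rw [Finsupp.mapDomain_single, pow_succ, mul_neg_one, Finsupp.single_neg, neg_neg]

theorem sum_altBlock_apply {n t : ℕ} (ht : t ∈ Ico n (n + n)) :
    (∑ k ∈ range (2 * n), altBlock n k) t = n * (-1) ^ t := by
  have hfilter : (range (2 * n)).filter (fun k => t ∈ Ico k (k + n)) = Ico (t + 1 - n) (t + 1) := by
    ext k
    simp only [mem_filter, mem_range, mem_Ico] at ht ⊢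
    lia
  have hcard : t + 1 - (t + 1 - n) = n := by
    rw [mem_Ico] at ht
    lia
  simp only [Finsupp.finsetSum_apply, altBlock_apply]
  rw [← sum_filter, hfilter, sum_const, Nat.card_Ico, hcard, nsmul_eq_mul]

variable {m : Seminorm ℝ (ℕ →₀ ℝ)}

theorem map_altBlock (hm : ∀ w, m (w.mapDomain Nat.succ) = m w) (n k : ℕ) :
    m (altBlock n k) = m (altBlock n 0) := by
  induction k with
  | zero => rfl
  | succ k ih => rw [← ih, ← hm (altBlock n k), altBlock_mapDomain_succ, map_neg_eq_map]

theorem map_sum_altBlock_add_shift_le (hm : ∀ w, m (w.mapDomain Nat.succ) = m w) (n N : ℕ) :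
    m (∑ k ∈ range N, altBlock n k + (∑ k ∈ range N, altBlock n k).mapDomain Nat.succ) ≤
      2 * m (altBlock n 0) :=
  calc _ = m (altBlock n 0 - altBlock n N) := by
        simp only [Finsupp.mapDomain_finsetSum, ← sum_add_distrib, altBlock_mapDomain_succ,
          ← sub_eq_add_neg]
        rw [sum_range_sub']
    _ ≤ m (altBlock n 0) + m (altBlock n N) := map_sub_le_add _ _ _
    _ = 2 * m (altBlock n 0) := by rw [map_altBlock hm n N, two_mul]

theorem mul_map_altBlock_le (hm : ∀ w, m (w.mapDomain Nat.succ) = m w)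
    (hsup : IsSuppressionUnconditional m) (n : ℕ) :
    n * m (altBlock n 0) ≤ m (∑ k ∈ range (2 * n), altBlock n k) := by
  rw [← map_altBlock hm n n, ← Real.norm_natCast, ← map_smul_eq_mul]
  refine hsup _ _ fun t => ?_
  rw [Finsupp.smul_apply, altBlock_apply, smul_eq_mul]
  split_ifs with ht
  · exact Or.inl (sum_altBlock_apply ht).symm
  · exact Or.inr (mul_zero _)

theorem map_altBlock_pos (hsup : IsSuppressionUnconditional m)
    (h0 : 0 < m (Finsupp.single 0 1)) {n : ℕ} (hn : 0 < n) : 0 < m (altBlock n 0) := by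
  refine h0.trans_le (hsup _ _ fun t => ?_)
  rcases eq_or_ne t 0 with rfl | ht
  · simp [altBlock_apply, hn]
  · exact Or.inr (Finsupp.single_eq_of_ne ht)

theorem exists_map_add_shift_le (hm : ∀ w, m (w.mapDomain Nat.succ) = m w)
    (hsup : IsSuppressionUnconditional m) (h0 : 0 < m (Finsupp.single 0 1)) {n : ℕ} (hn : 0 < n) :
    ∃ w, m w = 1 ∧ m (w + w.mapDomain Nat.succ) ≤ 2 / n := by
  have hn' : (0 : ℝ) < n := Nat.cast_pos.2 hn
  have hle := mul_map_altBlock_le hm hsup n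
  have hadd := map_sum_altBlock_add_shift_le hm n (2 * n)
  set z := ∑ k ∈ range (2 * n), altBlock n k
  have hz : 0 < m z := (mul_pos hn' (map_altBlock_pos hsup h0 hn)).trans_le hle
  have hinv : ‖(m z)⁻¹‖ = (m z)⁻¹ := Real.norm_of_nonneg (inv_nonneg.2 hz.le)
  refine ⟨(m z)⁻¹ • z, ?_, ?_⟩
  · rw [map_smul_eq_mul, hinv, inv_mul_cancel₀ hz.ne']
  · rw [Finsupp.mapDomain_smul, ← smul_add, map_smul_eq_mul, hinv, inv_mul_le_iff₀ hz,
      mul_div_assoc', le_div_iff₀ hn']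
    linarith [mul_le_mul_of_nonneg_right hadd hn'.le]

end AlternatingBlocks

section Unconditional

variable {ι E : Type*} [AddCommGroup E] [Module ℝ E]

/-- The seminorm is monotone in the absolute values of the coordinates. -/
def IsUnconditional (M : Seminorm ℝ (ι →₀ ℝ)) : Prop :=
  ∀ f g : ι →₀ ℝ, (∀ r, |f r| ≤ |g r|) → M f ≤ M g

theorem seminorm_smul_add_le {M : Seminorm ℝ E} {x y : E} (h : M (-x + y) ≤ M (x + y)) {t : ℝ}
    (ht : |t| ≤ 1) : M (t • x + y) ≤ M (x + y) := by
  obtain ⟨h₁, h₂⟩ := abs_le.1 ht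
  calc M (t • x + y) = M (((1 + t) / 2) • (x + y) + ((1 - t) / 2) • (-x + y)) := by
        congr 1
        module
    _ ≤ (1 + t) / 2 * M (x + y) + (1 - t) / 2 * M (-x + y) := by
        refine (map_add_le_add _ _ _).trans_eq ?_
        rw [map_smul_eq_mul, map_smul_eq_mul, Real.norm_of_nonneg (by linarith),
          Real.norm_of_nonneg (by linarith)]
    _ ≤ (1 + t) / 2 * M (x + y) + (1 - t) / 2 * M (x + y) := by
        gcongr
    _ = M (x + y) := by ring

theorem isUnconditional_of_neg_le {M : Seminorm ℝ (ι →₀ ℝ)}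
    (h : ∀ r f a, f r = 0 → M (-Finsupp.single r a + f) ≤ M (Finsupp.single r a + f)) :
    IsUnconditional M := by
  intro f g hfg
  refine seminorm_le_of_forall_single_add (R := fun a b => |a| ≤ |b|) (fun _ => le_rfl) ?_ hfg
  intro r f a b hr hab
  have hmul : a = a / b * b := by
    rcases eq_or_ne b 0 with rfl | hb
    · simpa using hab
    · exact (div_mul_cancel₀ a hb).symm
  have hdiv : |a / b| ≤ 1 := by
    rw [abs_div]
    exact div_le_one_of_le₀ hab (abs_nonneg b)
  rw [hmul, ← smul_eq_mul, ← Finsupp.smul_single]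
  exact seminorm_smul_add_le (h r f b hr) hdiv

theorem seminorm_le_sum_abs_mul (N : Seminorm ℝ (ι →₀ ℝ)) (v : ι →₀ ℝ) :
    N v ≤ ∑ r ∈ v.support, |v r| * N (Finsupp.single r 1) := by
  conv_lhs => rw [← v.sum_single]
  refine (le_sum_of_subadditive N (map_zero N).le (map_add_le_add N) _ _).trans_eq
    (sum_congr rfl fun r _ => ?_)
  rw [← Finsupp.smul_single_one, map_smul_eq_mul, Real.norm_eq_abs]

variable [LinearOrder ι] {M : Seminorm ℝ (ι ×ₗ ℕ →₀ ℝ)}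

theorem IsSpreading.exists_blockMap_single_add_shift_le [Nonempty ι] (hM : IsSpreading M)
    (hsup : IsSuppressionUnconditional M) (h0 : ∀ p, 0 < M (Finsupp.single p 1)) {n : ℕ}
    (hn : 0 < n) : ∃ w : ℕ →₀ ℝ, ∀ r, M (blockMap w (Finsupp.single r 1)) = 1 ∧
      M (blockMap (w + w.mapDomain Nat.succ) (Finsupp.single r 1)) ≤ 2 / n := by
  obtain ⟨s⟩ := ‹Nonempty ι›
  let m := M.comp (Finsupp.lmapDomain ℝ ℝ fun i : ℕ => toLex (s, i))
  have hm (w : ℕ →₀ ℝ) : m w = M (blockMap w (Finsupp.single s 1)) := by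
    rw [blockMap_single, one_smul]
    rfl
  obtain ⟨w, hw, hadd⟩ := exists_map_add_shift_le (m := m)
    (fun w => by
      simpa [hm] using hM.comp_blockMap_mapDomain (fun _ _ => Nat.succ_lt_succ) w 0 1
        (f := 0) (r := s) rfl)
    (fun f g hfg => by
      rw [hm, hm]
      refine hsup _ _ fun p => ?_
      rw [blockMap_apply, blockMap_apply]
      exact (hfg (ofLex p).2).imp (congrArg _) fun h => mul_eq_zero_of_right _ h)
    (by simpa [hm, blockMap_single_right] using h0 _) hn
  exact ⟨w, fun r => ⟨((hM.comp_blockMap w).map_single_eq r s 1).trans ((hm w).symm.trans hw),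
    ((hM.comp_blockMap _).map_single_eq r s 1).trans_le ((hm _).symm.trans_le hadd)⟩⟩

theorem IsSpreading.comp_blockMap_neg_single_le (hM : IsSpreading M) (w : ℕ →₀ ℝ) (a : ℝ) {r : ι}
    {f : ι →₀ ℝ} (hr : f r = 0) :
    M (blockMap w (-Finsupp.single r a + f)) ≤ M (blockMap w (Finsupp.single r a + f)) +
      |a| * M (blockMap (w + w.mapDomain Nat.succ) (Finsupp.single r 1)) := by
  have hmove := hM.comp_blockMap_mapDomain (fun _ _ => Nat.succ_lt_succ) w w (-a) hr
  rw [Finsupp.single_neg] at hmove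
  calc M (blockMap w (-Finsupp.single r a + f))
      = M (blockMap (w.mapDomain Nat.succ) (-Finsupp.single r a) + blockMap w f) := by
        rw [hmove, map_add]
    _ = M (blockMap w (Finsupp.single r a + f) +
          (-a) • blockMap (w + w.mapDomain Nat.succ) (Finsupp.single r 1)) := by
        rw [← map_smul, Finsupp.smul_single_one, Finsupp.single_neg, blockMap_add_left]
        simp only [map_add (blockMap w), map_neg]
        congr 1
        abel
    _ ≤ _ := by
        refine (map_add_le_add _ _ _).trans_eq ?_
        rw [map_smul_eq_mul, norm_neg, Real.norm_eq_abs]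

theorem IsSpreading.exists_isUnconditional [Nonempty ι] (hM : IsSpreading M)
    (hsup : IsSuppressionUnconditional M) (h0 : ∀ p, 0 < M (Finsupp.single p 1)) :
    ∃ S : Seminorm ℝ (ι →₀ ℝ), IsSpreading S ∧ IsUnconditional S ∧
      (∀ r, S (Finsupp.single r 1) = 1) ∧
      ∀ θ, 0 ≤ θ → BlockRepresents S θ → BlockRepresents M θ := by
  choose w hw using fun k : ℕ => hM.exists_blockMap_single_add_shift_le hsup h0 k.succ_pos
  obtain ⟨S, hS⟩ := exists_seminorm_tendsto_of_eventually_le (hyperfilter ℕ)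
    (s := fun k => M.comp (blockMap (w k)))
    (fun v => ⟨_, .of_forall fun k => (seminorm_le_sum_abs_mul _ v).trans_eq <|
      sum_congr rfl fun r _ => congrArg (|v r| * ·) (hw k r).1⟩)
  simp only [Seminorm.comp_apply] at hS
  refine ⟨S, fun f g hg => ?_, isUnconditional_of_neg_le fun r f a hr => ?_, fun r => ?_,
    fun θ hθ h => h.of_tendsto_comp hθ hS fun y hy => .of_forall fun k => hy.map_blockMap (w k)⟩
  · exact tendsto_nhds_unique ((hS _).congr fun k => hM.comp_blockMap (w k) f g hg) (hS f)
  · have hzero : Tendsto (fun k : ℕ => |a| * (2 / ((k + 1 : ℕ) : ℝ))) (hyperfilter ℕ)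
        (𝓝 (|a| * 0)) :=
      (((tendsto_const_div_atTop_nhds_zero_nat 2).comp (tendsto_add_atTop_nat 1)).mono_left
        Nat.hyperfilter_le_atTop).const_mul _
    have hlim := (hS (Finsupp.single r a + f)).add hzero
    rw [mul_zero, add_zero] at hlim
    refine le_of_tendsto_of_tendsto' (hS _) hlim fun k => ?_
    exact (hM.comp_blockMap_neg_single_le (w k) a hr).trans <|
      add_le_add_right (mul_le_mul_of_nonneg_left (hw k r).2 (abs_nonneg a)) _
  · refine tendsto_nhds_unique (hS _) ?_
    simp only [(hw _ r).1, tendsto_const_nhds]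

end Unconditional

section Cone

variable {E : Type*} [AddCommGroup E] [Module ℝ E]

/-- The seminorm `M` is monotone on the cone `C` for the order whose positive elements are those
of `C`. -/
def IsMonotoneOnCone (C : PointedCone ℝ E) (M : Seminorm ℝ E) : Prop :=
  ∀ ⦃x⦄, x ∈ C → ∀ ⦃y⦄, y - x ∈ C → M x ≤ M y

/-- The partial sum `1 + S + ⋯ + S ^ (n - 1)` of the Neumann series of `S`. -/
def geomSum (S : Module.End ℝ E) (n : ℕ) : Module.End ℝ E := ∑ i ∈ range n, S ^ i

variable {C : PointedCone ℝ E} {M : Seminorm ℝ E} {S : Module.End ℝ E}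

theorem geomSum_apply (S : Module.End ℝ E) (n : ℕ) (x : E) :
    geomSum S n x = ∑ i ∈ range n, (S ^ i) x := by
  rw [geomSum, LinearMap.sum_apply]

theorem pow_apply_mem (hS : ∀ x ∈ C, S x ∈ C) (i : ℕ) {x : E} (hx : x ∈ C) : (S ^ i) x ∈ C := by
  induction i with
  | zero => exact hx
  | succ i ih => rw [pow_succ']; exact hS _ ih

theorem geomSum_apply_mem (hS : ∀ x ∈ C, S x ∈ C) (n : ℕ) {x : E} (hx : x ∈ C) :
    geomSum S n x ∈ C := by
  rw [geomSum_apply]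
  exact sum_mem fun i _ => pow_apply_mem hS i hx

theorem seminorm_pow_apply_le {B : ℝ} (hB : 0 ≤ B) (h : ∀ x, M (S x) ≤ B * M x) (i : ℕ) (x : E) :
    M ((S ^ i) x) ≤ B ^ i * M x := by
  induction i with
  | zero => simp
  | succ i ih =>
    rw [pow_succ', Module.End.mul_apply]
    calc M (S ((S ^ i) x)) ≤ B * (B ^ i * M x) := (h _).trans (by gcongr)
      _ = B ^ (i + 1) * M x := by ring

theorem seminorm_geomSum_apply_le {B : ℝ} (hB : 1 ≤ B) (h : ∀ x, M (S x) ≤ B * M x) (n : ℕ)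
    (x : E) : M (geomSum S n x) ≤ n * B ^ n * M x := by
  rw [geomSum_apply]
  calc M (∑ i ∈ range n, (S ^ i) x) ≤ ∑ i ∈ range n, M ((S ^ i) x) :=
        le_sum_of_subadditive M (map_zero M).le (map_add_le_add M) _ _
    _ ≤ ∑ _i ∈ range n, B ^ n * M x := by
        refine sum_le_sum fun i hi => (seminorm_pow_apply_le (by positivity) h i x).trans ?_
        have := (mem_range.1 hi).le
        gcongr
    _ = n * B ^ n * M x := by simp [mul_assoc]

theorem seminorm_geomSum_sub_apply_le (n : ℕ) (x : E) :
    M (geomSum S n x - S (geomSum S n x)) ≤ M x + M ((S ^ n) x) := by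
  have telescope : geomSum S n x - S (geomSum S n x) = x - (S ^ n) x :=
    LinearMap.congr_fun (mul_neg_geom_sum S n) x
  rw [telescope]
  exact map_sub_le_add M _ _

theorem monotone_seminorm_geomSum (hM : IsMonotoneOnCone C M) (hS : ∀ x ∈ C, S x ∈ C) {x : E}
    (hx : x ∈ C) : Monotone fun n => M (geomSum S n x) := by
  refine monotone_nat_of_le_succ fun n => hM (geomSum_apply_mem hS n hx) ?_
  rw [geomSum_apply, geomSum_apply, sum_range_succ, add_sub_cancel_left]
  exact pow_apply_mem hS n hx

theorem seminorm_le_seminorm_geomSum_pow (hM : IsMonotoneOnCone C M) (hS : ∀ x ∈ C, S x ∈ C)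
    {n : ℕ} (hn : n ≠ 0) (i : ℕ) {x : E} (hx : x ∈ C) : M x ≤ M ((geomSum S n ^ i) x) := by
  induction i with
  | zero => rfl
  | succ i ih =>
    have hmono := monotone_seminorm_geomSum hM hS
      (pow_apply_mem (fun _ => geomSum_apply_mem hS n) i hx) (Nat.one_le_iff_ne_zero.2 hn)
    rw [pow_succ', Module.End.mul_apply]
    refine ih.trans ?_
    simpa [geomSum] using hmono

/-- Each `i ≤ k` contributes one copy of `S ^ k = S ^ i * S ^ (k - i)` to the square of
`geomSum S (k + 1)`. -/
theorem mul_seminorm_pow_le_seminorm_geomSum_sq (hM : IsMonotoneOnCone C M)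
    (hS : ∀ x ∈ C, S x ∈ C) (k : ℕ) {x : E} (hx : x ∈ C) :
    (k + 1) * M ((S ^ k) x) ≤ M ((geomSum S (k + 1) ^ 2) x) := by
  have hk := pow_apply_mem hS k hx
  have hmem : (geomSum S (k + 1) ^ 2) x - (k + 1 : ℝ) • (S ^ k) x ∈ C := by
    have hcopies : (k + 1 : ℝ) • (S ^ k) x = ∑ _i ∈ range (k + 1), (S ^ k) x := by
      rw [sum_const, card_range, ← Nat.cast_smul_eq_nsmul ℝ, Nat.cast_succ]
    rw [sq, Module.End.mul_apply, geomSum_apply S _ (geomSum S _ x), hcopies, ← sum_sub_distrib]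
    refine sum_mem fun i hi => ?_
    have hki : k - i ∈ range (k + 1) := mem_range.2 (by lia)
    have hpow : (S ^ i) ((S ^ (k - i)) x) = (S ^ k) x := by
      rw [← Module.End.mul_apply, ← pow_add, Nat.add_sub_cancel' (mem_range_succ_iff.1 hi)]
    rw [geomSum_apply, ← add_sum_erase _ _ hki, map_add, hpow, add_sub_cancel_left]
    exact pow_apply_mem hS i (sum_mem fun j _ => pow_apply_mem hS j hx)
  have := hM (C.smul_mem (by positivity : (0 : ℝ) ≤ k + 1) hk) hmem
  rwa [map_smul_eq_mul, Real.norm_of_nonneg (by positivity)] at this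

theorem exists_mul_seminorm_geomSum_pow_le (hM : IsMonotoneOnCone C M) (hS : ∀ x ∈ C, S x ∈ C)
    {A : ℝ} (hA : 0 ≤ A) {k : ℕ} (hk : 4 * A ^ 2 ≤ k + 1) {x : E} (hx : x ∈ C)
    (hxk : M x ≤ 4 * M ((S ^ k) x)) :
    ∃ i ≤ 1, A * M ((geomSum S (k + 1) ^ i) x) ≤ M ((geomSum S (k + 1) ^ (i + 1)) x) := by
  by_cases h : A * M x ≤ M (geomSum S (k + 1) x)
  · exact ⟨0, zero_le_one, by simpa using h⟩
  refine ⟨1, le_rfl, ?_⟩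
  rw [pow_one]
  calc A * M (geomSum S (k + 1) x) ≤ A * (A * (4 * M ((S ^ k) x))) := by
        gcongr; exact (not_le.1 h).le.trans (by gcongr)
    _ = 4 * A ^ 2 * M ((S ^ k) x) := by ring
    _ ≤ (k + 1) * M ((S ^ k) x) := by gcongr
    _ ≤ _ := mul_seminorm_pow_le_seminorm_geomSum_sq hM hS k hx

theorem exists_mul_seminorm_sub_apply_le (hM : IsMonotoneOnCone C M) (hS : ∀ x ∈ C, S x ∈ C)
    {r : ℕ} (hr : r ≠ 0) (hSr : ∀ x ∈ C, M ((S ^ r) x) ≤ M x) {A : ℝ} (hA : 0 ≤ A) {k : ℕ}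
    (hk : 4 * A ^ 2 ≤ k + 1) {x : E} (hx : x ∈ C) (hx0 : 0 < M x)
    (hxk : M x ≤ 4 * M ((S ^ k) x)) :
    ∃ z ∈ C, 0 < M z ∧ A * M (z - S z) ≤ 2 * M z := by
  obtain ⟨i, -, hi⟩ := exists_mul_seminorm_geomSum_pow_le hM hS hA hk hx hxk
  set y := (geomSum S (k + 1) ^ i) x
  have hy : y ∈ C := pow_apply_mem (fun _ => geomSum_apply_mem hS _) i hx
  have hiter : ∀ t, M ((S ^ (r * t)) y) ≤ M y := by
    intro t
    induction t with
    | zero => simp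
    | succ t ih =>
      rw [mul_add_one, add_comm, pow_add, Module.End.mul_apply]
      exact (hSr _ (pow_apply_mem hS _ hy)).trans ih
  have hz : M (geomSum S (k + 1) y) ≤ M (geomSum S (r * (k + 1)) y) :=
    monotone_seminorm_geomSum hM hS hy (Nat.le_mul_of_pos_left _ (Nat.pos_of_ne_zero hr))
  refine ⟨geomSum S (r * (k + 1)) y, geomSum_apply_mem hS _ hy, ?_, ?_⟩
  · have hxz := seminorm_le_seminorm_geomSum_pow hM hS k.succ_ne_zero (i + 1) hx
    rw [pow_succ', Module.End.mul_apply] at hxz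
    exact hx0.trans_le (hxz.trans hz)
  · have hdiff := seminorm_geomSum_sub_apply_le (M := M) (S := S) (r * (k + 1)) y
    rw [pow_succ', Module.End.mul_apply] at hi
    calc A * M (geomSum S (r * (k + 1)) y - S (geomSum S (r * (k + 1)) y))
        ≤ A * (M y + M y) := by gcongr; exact hdiff.trans (by gcongr; exact hiter _)
      _ = 2 * (A * M y) := by ring
      _ ≤ _ := by gcongr; exact hi.trans hz

end Cone

section ApproximateEigenvalue

variable {E : Type*} [AddCommGroup E] [Module ℝ E] {C : PointedCone ℝ E} {M : Seminorm ℝ E}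
  {T : Module.End ℝ E}

theorem seminorm_apply_sub_smul_le {μ l : ℝ} (hμ : 0 < μ) (hl : l ≤ μ) (z : E) :
    M (T z - l • z) ≤ μ * M (z - (μ⁻¹ • T) z) + (μ - l) * M z := by
  have hsplit : T z - l • z = (-μ) • (z - (μ⁻¹ • T) z) + (μ - l) • z := by
    rw [LinearMap.smul_apply, smul_sub, smul_smul, neg_mul, mul_inv_cancel₀ hμ.ne']
    module
  rw [hsplit]
  refine (map_add_le_add M _ _).trans_eq ?_
  rw [map_smul_eq_mul, map_smul_eq_mul, norm_neg, Real.norm_of_nonneg hμ.le,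
    Real.norm_of_nonneg (sub_nonneg.2 hl)]

/-- The exponential growth rates `μ` that dominate some power of `T` on the cone `C`. Their
infimum is the spectral radius of `T` on the cone. -/
def growthRates (C : PointedCone ℝ E) (M : Seminorm ℝ E) (T : Module.End ℝ E) : Set ℝ :=
  {μ | 0 < μ ∧ ∃ k ≠ 0, ∀ x ∈ C, M ((T ^ k) x) ≤ μ ^ k * M x}

theorem one_le_of_mem_growthRates {e : E} (he : e ∈ C) (he0 : 0 < M e)
    (hT : ∀ k, M e ≤ M ((T ^ k) e)) {μ : ℝ} (hμ : μ ∈ growthRates C M T) : 1 ≤ μ := by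
  obtain ⟨hμ0, k, hk, h⟩ := hμ
  have hpow : 1 ≤ μ ^ k := le_of_mul_le_mul_right (by linarith [hT k, h e he]) he0
  exact (one_le_pow_iff_of_nonneg hμ0.le hk).1 hpow

theorem exists_mem_growthRates_and_lt (hne : (growthRates C M T).Nonempty)
    (hpos : 0 < sInf (growthRates C M T)) {k : ℕ} (hk : k ≠ 0) {η : ℝ} (hη : 0 < η) :
    ∃ μ ∈ growthRates C M T, μ < sInf (growthRates C M T) + η ∧
      ∃ x ∈ C, μ ^ k * M x < 4 * M ((T ^ k) x) := by
  set l := sInf (growthRates C M T)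
  have hbdd : BddBelow (growthRates C M T) := ⟨0, fun μ hμ => hμ.1.le⟩
  set c : ℝ := 4 ^ (k : ℝ)⁻¹
  have hck : c ^ k = 4 := Real.rpow_inv_natCast_pow (by norm_num) hk
  have hc : 1 < c := Real.one_lt_rpow (by norm_num) (by positivity)
  obtain ⟨μ, hμ, hμlt⟩ := exists_lt_of_csInf_lt hne
    (lt_min (lt_mul_of_one_lt_right hpos hc) (lt_add_of_pos_right l hη))
  rw [lt_min_iff] at hμlt
  refine ⟨μ, hμ, hμlt.2, ?_⟩
  have hμc : μ / c ∉ growthRates C M T := fun h =>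
    (csInf_le hbdd h).not_gt ((div_lt_iff₀ (by positivity)).2 hμlt.1)
  by_contra! hle
  refine hμc ⟨div_pos hμ.1 (by positivity), k, hk, fun x hx => ?_⟩
  rw [div_pow, hck]
  linarith [hle x hx]

theorem exists_approx_eigenvalue (hM : IsMonotoneOnCone C M) (hT : ∀ x ∈ C, T x ∈ C) {B : ℝ}
    (hB : 0 < B) (hTB : ∀ x, M (T x) ≤ B * M x) {e : E} (he : e ∈ C) (he0 : 0 < M e)
    (hTe : ∀ k, M e ≤ M ((T ^ k) e)) :
    ∃ l ∈ Set.Icc 1 B, ∀ δ > 0, ∃ z ∈ C, 0 < M z ∧ M (T z - l • z) ≤ δ * M z := by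
  have hBmem : B ∈ growthRates C M T :=
    ⟨hB, 1, one_ne_zero, fun x _ => by simpa only [pow_one] using hTB x⟩
  have hlow : ∀ μ ∈ growthRates C M T, 1 ≤ μ := fun μ => one_le_of_mem_growthRates he he0 hTe
  set l := sInf (growthRates C M T)
  have hl1 : 1 ≤ l := le_csInf ⟨B, hBmem⟩ hlow
  refine ⟨l, ⟨hl1, csInf_le ⟨1, hlow⟩ hBmem⟩, fun δ hδ => ?_⟩
  set A := 4 * (l + δ) / δ
  have hA : 0 < A := by positivity
  obtain ⟨k, hk⟩ := exists_nat_ge (4 * A ^ 2)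
  have hk0 : k ≠ 0 := by rintro rfl; rw [Nat.cast_zero] at hk; nlinarith
  obtain ⟨μ, ⟨hμ0, r, hr, hμr⟩, hμl, x, hx, hxk⟩ :=
    exists_mem_growthRates_and_lt ⟨B, hBmem⟩ (by linarith) hk0 (half_pos hδ)
  have hlμ : l ≤ μ := csInf_le ⟨1, hlow⟩ ⟨hμ0, r, hr, hμr⟩
  have hpow : ∀ i y, M (((μ⁻¹ • T) ^ i) y) = (μ ^ i)⁻¹ * M ((T ^ i) y) := fun i y => by
    rw [smul_pow, LinearMap.smul_apply, map_smul_eq_mul, inv_pow,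
      Real.norm_of_nonneg (by positivity)]
  have hx0 : 0 < M x := by
    have hle := seminorm_pow_apply_le hB.le hTB k x
    refine (apply_nonneg M x).lt_of_ne' fun h => ?_
    rw [h] at hxk hle
    linarith
  obtain ⟨z, hz, hz0, hzS⟩ := exists_mul_seminorm_sub_apply_le (S := μ⁻¹ • T) hM
    (fun y hy => C.smul_mem (by positivity : 0 ≤ μ⁻¹) (hT y hy)) hr
    (fun y hy => by rw [hpow, inv_mul_le_iff₀ (by positivity)]; exact hμr y hy) hA.le
    (hk.trans (by linarith)) hx hx0
    (by rw [hpow, inv_mul_eq_div, mul_div_assoc', le_div_iff₀ (by positivity)]; linarith)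
  refine ⟨z, hz, hz0, ?_⟩
  have hzS' : (l + δ) * M (z - (μ⁻¹ • T) z) ≤ δ / 2 * M z := by
    simp only [A] at hzS
    rw [div_mul_eq_mul_div, div_le_iff₀ hδ] at hzS
    linarith
  calc M (T z - l • z) ≤ μ * M (z - (μ⁻¹ • T) z) + (μ - l) * M z :=
        seminorm_apply_sub_smul_le hμ0 hlμ z
    _ ≤ (l + δ) * M (z - (μ⁻¹ • T) z) + δ / 2 * M z := by gcongr <;> linarith
    _ ≤ δ * M z := by linarith

end ApproximateEigenvalue

section ApproximateEigenvectors

variable {E : Type*} [AddCommGroup E] [Module ℝ E]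

/-- A multiplicative action `T` of `ℕ` on `E` by operators that preserve the cone `C`, such that
the seminorm `M` is monotone on `C`, grows at most linearly along `T`, and is monotone along the
orbits of points of `C`. The model is `f ↦ ∑ i < n, f (n · - i)`, which puts `n` compressed copies
of `f` next to each other. -/
structure IsDilationAction (C : PointedCone ℝ E) (M : Seminorm ℝ E) (T : ℕ →* Module.End ℝ E) :
    Prop where
  isMonotoneOnCone : IsMonotoneOnCone C M
  apply_mem (n : ℕ) {x : E} : x ∈ C → T n x ∈ C
  apply_le (n : ℕ) (x : E) : M (T n x) ≤ n * M x
  apply_mono {m n : ℕ} {x : E} : m ≠ 0 → m ≤ n → x ∈ C → M (T m x) ≤ M (T n x)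

/-- There are points of the cone `C` that are simultaneous approximate eigenvectors of
`T 1, …, T Q`, with eigenvalue `q ^ θ` for `T q` and arbitrarily small relative error. -/
def HasApproxEigenvectors (C : PointedCone ℝ E) (M : Seminorm ℝ E) (T : ℕ →* Module.End ℝ E)
    (θ : ℝ) (Q : ℕ) : Prop :=
  ∀ δ > 0, ∃ y ∈ C, 0 < M y ∧ ∀ q ∈ Icc 1 Q, M (T q y - (q : ℝ) ^ θ • y) ≤ δ * M y

/-- The operator `q ^ (-θ) T q`, which fixes the eigenvectors of `T q` with eigenvalue `q ^ θ`. -/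
noncomputable def scaledAction (T : ℕ →* Module.End ℝ E) (θ : ℝ) (q : ℕ) : Module.End ℝ E :=
  ((q : ℝ) ^ θ)⁻¹ • T q

variable {C : PointedCone ℝ E} {M : Seminorm ℝ E} {T : ℕ →* Module.End ℝ E} {θ : ℝ}

theorem seminorm_pow_apply_sub_smul_le {S : Module.End ℝ E} {B l d : ℝ} (hB : 1 ≤ B)
    (hS : ∀ x, M (S x) ≤ B * M x) (hl : l ∈ Set.Icc 0 B) {y : E} (h : M (S y - l • y) ≤ d)
    (a : ℕ) : M ((S ^ a) y - l ^ a • y) ≤ a * B ^ a * d := by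
  have hd : 0 ≤ d := (apply_nonneg _ _).trans h
  induction a with
  | zero => simp
  | succ a ih =>
    have hsplit : (S ^ (a + 1)) y - l ^ (a + 1) • y =
        (S ^ a) (S y - l • y) + l • ((S ^ a) y - l ^ a • y) := by
      rw [pow_succ, Module.End.mul_apply, map_sub, map_smul, pow_succ]
      module
    calc M ((S ^ (a + 1)) y - l ^ (a + 1) • y)
        ≤ M ((S ^ a) (S y - l • y)) + l * M ((S ^ a) y - l ^ a • y) := by
          rw [hsplit]
          refine (map_add_le_add M _ _).trans_eq ?_
          rw [map_smul_eq_mul, Real.norm_of_nonneg hl.1]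
      _ ≤ B ^ a * d + B * (a * B ^ a * d) := by
          have hSa := (seminorm_pow_apply_le (by positivity) hS a (S y - l • y)).trans
            (mul_le_mul_of_nonneg_left h (by positivity))
          gcongr
          exact hl.2
      _ ≤ B * (B ^ a * d) + B * (a * B ^ a * d) := by
          have := le_mul_of_one_le_left (show 0 ≤ B ^ a * d by positivity) hB
          gcongr
      _ = _ := by push_cast; ring

theorem abs_seminorm_two_pow_apply_sub_le (hT : IsDilationAction C M T) (hθ : θ ∈ Set.Icc 0 1)
    {y : E} {d : ℝ} (hd : M (T 2 y - (2 : ℝ) ^ θ • y) ≤ d * M y) (b : ℕ) :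
    |M (T (2 ^ b) y) - ((2 ^ b : ℕ) : ℝ) ^ θ * M y| ≤ (2 ^ b) ^ 2 * d * M y := by
  have hl : (2 : ℝ) ^ θ ∈ Set.Icc 0 2 :=
    ⟨by positivity, (Real.rpow_le_rpow_of_exponent_le one_le_two hθ.2).trans_eq (Real.rpow_one 2)⟩
  have herr := seminorm_pow_apply_sub_smul_le one_le_two (fun x => by simpa using hT.apply_le 2 x)
    hl hd b
  have hd0 : 0 ≤ d * M y := (apply_nonneg _ _).trans hd
  have hb : (b : ℝ) ≤ 2 ^ b := by exact_mod_cast Nat.lt_two_pow_self.le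
  rw [Real.rpow_pow_comm zero_le_two, ← map_pow] at herr
  have habs := abs_sub_map_le_sub M (T (2 ^ b) y) (((2 : ℝ) ^ b) ^ θ • y)
  rw [map_smul_eq_mul, Real.norm_of_nonneg (by positivity)] at habs
  push_cast
  calc |M (T (2 ^ b) y) - ((2 : ℝ) ^ b) ^ θ * M y| ≤ b * 2 ^ b * (d * M y) := habs.trans herr
    _ ≤ 2 ^ b * 2 ^ b * (d * M y) := by gcongr
    _ = _ := by ring

/-- Compare `n` with the powers of two around it. -/
theorem rpow_mul_seminorm_le_and_le (hT : IsDilationAction C M T) (hθ : θ ∈ Set.Icc 0 1)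
    {n : ℕ} (hn : n ≠ 0) {y : E} (hy : y ∈ C) {d : ℝ}
    (hd : M (T 2 y - (2 : ℝ) ^ θ • y) ≤ d * M y) (hdn : (2 * n) ^ 2 * d ≤ 1 / 4) :
    n ^ θ * M y ≤ 4 * M (T n y) ∧ M (T n y) ≤ 3 * (n ^ θ * M y) := by
  have hMy := apply_nonneg M y
  have hd0 : 0 ≤ d * M y := (apply_nonneg _ _).trans hd
  set a := Nat.log 2 n
  have ha : 2 ^ a ≤ n := Nat.pow_log_le_self 2 hn
  have ha' : n ≤ 2 ^ (a + 1) := (Nat.lt_pow_succ_log_self one_lt_two n).le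
  have herr : ∀ b ≤ a + 1, |M (T (2 ^ b) y) - ((2 ^ b : ℕ) : ℝ) ^ θ * M y| ≤ 1 / 4 * M y := by
    intro b hb
    have hbn : (2 : ℝ) ^ b ≤ 2 * n := by
      have : 2 ^ b ≤ 2 ^ a * 2 := (Nat.pow_le_pow_right two_pos hb).trans_eq (pow_succ 2 a)
      exact_mod_cast this.trans (by lia)
    refine (abs_seminorm_two_pow_apply_sub_le hT hθ hd b).trans ?_
    calc (2 ^ b) ^ 2 * d * M y = (2 ^ b) ^ 2 * (d * M y) := mul_assoc _ _ _
      _ ≤ (2 * n) ^ 2 * (d * M y) := by gcongr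
      _ = (2 * n) ^ 2 * d * M y := (mul_assoc _ _ _).symm
      _ ≤ 1 / 4 * M y := by gcongr
  have hlow : ((2 ^ a : ℕ) : ℝ) ^ θ ≤ n ^ θ := by
    have := hθ.1
    gcongr
  have hup : (n : ℝ) ^ θ ≤ ((2 ^ (a + 1) : ℕ) : ℝ) ^ θ := by
    have := hθ.1
    gcongr
  have hdouble : ((2 ^ (a + 1) : ℕ) : ℝ) ^ θ ≤ 2 * ((2 ^ a : ℕ) : ℝ) ^ θ := by
    rw [pow_succ', Nat.cast_mul, Nat.cast_two, Real.mul_rpow zero_le_two (by positivity)]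
    gcongr
    exact (Real.rpow_le_rpow_of_exponent_le one_le_two hθ.2).trans_eq (Real.rpow_one 2)
  have hone : 1 ≤ ((2 ^ a : ℕ) : ℝ) ^ θ :=
    Real.one_le_rpow (by exact_mod_cast Nat.one_le_two_pow) hθ.1
  constructor
  · have := (abs_le.1 (herr a a.le_succ)).1
    have := hT.apply_mono (by positivity) ha hy
    nlinarith
  · have := (abs_le.1 (herr (a + 1) le_rfl)).2
    have := hT.apply_mono hn ha' hy
    nlinarith

theorem scaledAction_pow (T : ℕ →* Module.End ℝ E) (θ : ℝ) (q k : ℕ) :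
    scaledAction T θ q ^ k = scaledAction T θ (q ^ k) := by
  rw [scaledAction, scaledAction, smul_pow, inv_pow, Real.rpow_pow_comm (Nat.cast_nonneg q),
    map_pow, Nat.cast_pow]

theorem scaledAction_apply_mem (hT : IsDilationAction C M T) (θ : ℝ) (q : ℕ) {x : E} (hx : x ∈ C) :
    scaledAction T θ q x ∈ C :=
  C.smul_mem (by positivity : 0 ≤ ((q : ℝ) ^ θ)⁻¹) (hT.apply_mem q hx)

theorem seminorm_scaledAction (M : Seminorm ℝ E) (T : ℕ →* Module.End ℝ E) (θ : ℝ) (q : ℕ) (x : E) :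
    M (scaledAction T θ q x) = ((q : ℝ) ^ θ)⁻¹ * M (T q x) := by
  rw [scaledAction, LinearMap.smul_apply, map_smul_eq_mul, Real.norm_of_nonneg (by positivity)]

theorem seminorm_scaledAction_le (hT : IsDilationAction C M T) (hθ : 0 ≤ θ) {q : ℕ} (hq : q ≠ 0)
    (x : E) : M (scaledAction T θ q x) ≤ q * M x := by
  have hq1 : (1 : ℝ) ≤ q := by exact_mod_cast Nat.one_le_iff_ne_zero.2 hq
  rw [seminorm_scaledAction]
  calc ((q : ℝ) ^ θ)⁻¹ * M (T q x) ≤ 1 * M (T q x) := by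
        gcongr
        exact inv_le_one_of_one_le₀ (Real.one_le_rpow hq1 hθ)
    _ ≤ q * M x := by rw [one_mul]; exact hT.apply_le q x

theorem commute_geomSum_scaledAction_pow (T : ℕ →* Module.End ℝ E) (θ : ℝ) (p q n i : ℕ) :
    Commute (T p) (geomSum (scaledAction T θ q) n ^ i) := by
  have hpq : Commute (T p) (T q) := by rw [Commute, SemiconjBy, ← map_mul, mul_comm, map_mul]
  exact (Commute.sum_right _ _ _ fun j _ => (hpq.smul_right _).pow_right j).pow_right i

theorem seminorm_apply_geomSum_scaledAction_sub_le (hT : IsDilationAction C M T) (hθ : 0 ≤ θ)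
    {q : ℕ} (hq : q ≠ 0) (p n i : ℕ) (l : ℝ) (x : E) :
    M (T p ((geomSum (scaledAction T θ q) n ^ i) x) - l • (geomSum (scaledAction T θ q) n ^ i) x) ≤
      (n * q ^ n) ^ i * M (T p x - l • x) := by
  have hq1 : (1 : ℝ) ≤ q := by exact_mod_cast Nat.one_le_iff_ne_zero.2 hq
  have hcomm : T p ((geomSum (scaledAction T θ q) n ^ i) x) =
      (geomSum (scaledAction T θ q) n ^ i) (T p x) :=
    LinearMap.congr_fun (commute_geomSum_scaledAction_pow T θ p q n i) x
  rw [hcomm, ← map_smul, ← map_sub]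
  exact seminorm_pow_apply_le (by positivity)
    (seminorm_geomSum_apply_le hq1 (seminorm_scaledAction_le hT hθ hq) n) i _

theorem seminorm_le_and_scaledAction_pow_le (hT : IsDilationAction C M T) (hθ : θ ∈ Set.Icc 0 1)
    {q : ℕ} (hq : q ≠ 0) {k K : ℕ} (hk : k ≤ K) {y : E} (hy : y ∈ C) {d : ℝ} (hd0 : 0 ≤ d)
    (hd : M (T 2 y - (2 : ℝ) ^ θ • y) ≤ d * M y) (hdq : (2 * q ^ K) ^ 2 * d ≤ 1 / 4) :
    M y ≤ 4 * M ((scaledAction T θ q ^ k) y) ∧ M ((scaledAction T θ q ^ k) y) ≤ 3 * M y := by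
  have hq1 : (1 : ℝ) ≤ q := by exact_mod_cast Nat.one_le_iff_ne_zero.2 hq
  have hgrowth := rpow_mul_seminorm_le_and_le hT hθ (pow_ne_zero k hq) hy hd <|
    calc (2 * ((q ^ k : ℕ) : ℝ)) ^ 2 * d ≤ (2 * q ^ K) ^ 2 * d := by push_cast; gcongr
      _ ≤ 1 / 4 := hdq
  have hpos : 0 < ((q ^ k : ℕ) : ℝ) ^ θ := by positivity
  rw [scaledAction_pow, seminorm_scaledAction, inv_mul_eq_div, mul_div_assoc', le_div_iff₀ hpos,
    div_le_iff₀ hpos]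
  constructor <;> linarith [hgrowth.1, hgrowth.2]

theorem HasApproxEigenvectors.exists_geomSum_pow (hT : IsDilationAction C M T) (hθ : 0 ≤ θ)
    {Q : ℕ} (h : HasApproxEigenvectors C M T θ Q) {q n : ℕ} (hq : q ≠ 0) (hn : n ≠ 0) {δ : ℝ}
    (hδ : 0 < δ) :
    ∃ x ∈ C, 0 < M x ∧ ∀ i ≤ 2, ∀ p ∈ Icc 1 Q,
      M (T p ((geomSum (scaledAction T θ q) n ^ i) x) -
        (p : ℝ) ^ θ • (geomSum (scaledAction T θ q) n ^ i) x) ≤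
      δ * M ((geomSum (scaledAction T θ q) n ^ i) x) := by
  have hc : (1 : ℝ) ≤ n * q ^ n := by
    exact_mod_cast Nat.one_le_iff_ne_zero.2 (mul_ne_zero hn (pow_ne_zero n hq))
  set c : ℝ := n * q ^ n
  obtain ⟨x, hx, hx0, hxerr⟩ := h (δ / c ^ 2) (by positivity)
  refine ⟨x, hx, hx0, fun i hi p hp => ?_⟩
  calc _ ≤ c ^ i * M (T p x - (p : ℝ) ^ θ • x) :=
        seminorm_apply_geomSum_scaledAction_sub_le hT hθ hq p n i _ x
    _ ≤ c ^ 2 * (δ / c ^ 2 * M x) := by gcongr; exact hxerr p hp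
    _ = δ * M x := by field_simp
    _ ≤ _ := by
        gcongr
        exact seminorm_le_seminorm_geomSum_pow hT.isMonotoneOnCone
          (fun _ => scaledAction_apply_mem hT θ q) hn i hx

theorem seminorm_apply_geomSum_scaledAction_sub_rpow_smul_le {q : ℕ} (hq : q ≠ 0) {n : ℕ} {y : E}
    (hy : M ((scaledAction T θ q ^ n) y) ≤ 3 * M y) :
    M (T q (geomSum (scaledAction T θ q) n y) - (q : ℝ) ^ θ • geomSum (scaledAction T θ q) n y) ≤
      4 * (q : ℝ) ^ θ * M y := by
  have hpos : 0 < (q : ℝ) ^ θ := by positivity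
  have hsub := seminorm_apply_sub_smul_le (M := M) (T := T q) hpos le_rfl
    (geomSum (scaledAction T θ q) n y)
  rw [sub_self, zero_mul, add_zero] at hsub
  calc _ ≤ (q : ℝ) ^ θ * (M y + M ((scaledAction T θ q ^ n) y)) :=
        hsub.trans (by gcongr; exact seminorm_geomSum_sub_apply_le n y)
    _ ≤ (q : ℝ) ^ θ * (M y + 3 * M y) := by gcongr
    _ = _ := by ring

theorem HasApproxEigenvectors.succ (hT : IsDilationAction C M T) (hθ : θ ∈ Set.Icc 0 1) {Q : ℕ}
    (hQ : 2 ≤ Q) (h : HasApproxEigenvectors C M T θ Q) :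
    HasApproxEigenvectors C M T θ (Q + 1) := by
  intro δ hδ
  have hq : Q + 1 ≠ 0 := Q.succ_ne_zero
  set q := Q + 1
  set A := 4 * (q : ℝ) ^ θ / δ with hA
  have hA0 : 0 < A := by positivity
  obtain ⟨k, hk⟩ := exists_nat_ge (4 * A ^ 2)
  set δ₀ := min δ (1 / 4 / (2 * q ^ (k + 1)) ^ 2)
  have hδ₀ : 0 < δ₀ := by positivity
  have hδ₀q : (2 * (q : ℝ) ^ (k + 1)) ^ 2 * δ₀ ≤ 1 / 4 := by
    rw [← le_div_iff₀' (by positivity)]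
    exact min_le_right _ _
  have hSmem : ∀ x ∈ C, scaledAction T θ q x ∈ C := fun x => scaledAction_apply_mem hT θ q
  obtain ⟨x, hx, hx0, hD⟩ := h.exists_geomSum_pow hT hθ.1 hq k.succ_ne_zero hδ₀
  set D := geomSum (scaledAction T θ q) (k + 1)
  have hDmem : ∀ i, (D ^ i) x ∈ C := fun i =>
    pow_apply_mem (fun _ => geomSum_apply_mem hSmem _) i hx
  have htwo : ∀ i ≤ 2, M (T 2 ((D ^ i) x) - (2 : ℝ) ^ θ • (D ^ i) x) ≤ δ₀ * M ((D ^ i) x) :=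
    fun i hi => by simpa using hD i hi 2 (mem_Icc.2 ⟨one_le_two, hQ⟩)
  obtain ⟨i, hi, hAi⟩ := exists_mul_seminorm_geomSum_pow_le hT.isMonotoneOnCone hSmem hA0.le
    (hk.trans (by linarith)) hx
    (seminorm_le_and_scaledAction_pow_le hT hθ hq k.le_succ hx hδ₀.le (htwo 0 zero_le_two) hδ₀q).1
  refine ⟨(D ^ (i + 1)) x, hDmem _, hx0.trans_le (seminorm_le_seminorm_geomSum_pow
    hT.isMonotoneOnCone hSmem k.succ_ne_zero _ hx), fun p hp => ?_⟩
  rcases (mem_Icc.1 hp).2.lt_or_eq with hpQ | rfl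
  · refine (hD (i + 1) (by lia) p (mem_Icc.2 ⟨(mem_Icc.1 hp).1, Nat.lt_succ_iff.1 hpQ⟩)).trans ?_
    gcongr
    exact min_le_left _ _
  · have hgrowth := (seminorm_le_and_scaledAction_pow_le hT hθ hq le_rfl (hDmem i) hδ₀.le
      (htwo i (by lia)) hδ₀q).2
    have hAδ : 4 * (q : ℝ) ^ θ = δ * A := by rw [hA]; field_simp
    rw [pow_succ', Module.End.mul_apply] at hAi ⊢
    calc _ ≤ 4 * (q : ℝ) ^ θ * M ((D ^ i) x) :=
          seminorm_apply_geomSum_scaledAction_sub_rpow_smul_le hq hgrowth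
      _ = δ * (A * M ((D ^ i) x)) := by rw [hAδ, mul_assoc]
      _ ≤ _ := by gcongr

theorem IsDilationAction.exists_hasApproxEigenvectors (hT : IsDilationAction C M T) {e : E}
    (he : e ∈ C) (he0 : 0 < M e) :
    ∃ θ ∈ Set.Icc (0 : ℝ) 1, ∀ Q, HasApproxEigenvectors C M T θ Q := by
  obtain ⟨l, ⟨hl1, hl2⟩, hl⟩ := exists_approx_eigenvalue (T := T 2) hT.isMonotoneOnCone
    (fun _ => hT.apply_mem 2) two_pos (fun x => by simpa using hT.apply_le 2 x) he he0 fun k => by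
      have := hT.apply_mono one_ne_zero (Nat.one_le_two_pow (n := k)) he
      rwa [map_one, map_pow] at this
  have hl0 : 0 < l := by linarith
  have hθ : Real.logb 2 l ∈ Set.Icc 0 1 := ⟨Real.logb_nonneg one_lt_two hl1, by
    rwa [Real.logb_le_iff_le_rpow one_lt_two hl0, Real.rpow_one]⟩
  refine ⟨Real.logb 2 l, hθ, fun Q => ?_⟩
  suffices h : HasApproxEigenvectors C M T (Real.logb 2 l) (Q + 2) by
    intro δ hδ
    obtain ⟨y, hy, hy0, hyQ⟩ := h δ hδ
    exact ⟨y, hy, hy0, fun q hq => hyQ q (Icc_subset_Icc_right (by lia) hq)⟩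
  induction Q with
  | zero =>
    intro δ hδ
    obtain ⟨z, hz, hz0, hz2⟩ := hl δ hδ
    refine ⟨z, hz, hz0, fun q hq => ?_⟩
    obtain rfl | rfl : q = 1 ∨ q = 2 := by rw [mem_Icc] at hq; lia
    · simpa using mul_nonneg hδ.le hz0.le
    · rwa [Nat.cast_ofNat, Real.rpow_logb two_pos one_lt_two.ne' hl0]
  | succ Q ih => exact ih.succ hT hθ (by lia)

end ApproximateEigenvectors

section Refinement

variable {ι κ : Type*} [LinearOrder ι] [LinearOrder κ] {M : Seminorm ℝ (ι →₀ ℝ)}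

theorem IsSpreading.map_mapDomain_congr (hM : IsSpreading M) {F : κ →₀ ℝ} {φ ψ : κ → ι}
    (hφ : StrictMonoOn φ F.support) (hψ : StrictMonoOn ψ F.support) :
    M (F.mapDomain φ) = M (F.mapDomain ψ) := by
  classical
  rcases isEmpty_or_nonempty κ with _ | _
  · rw [Subsingleton.elim F 0, Finsupp.mapDomain_zero, Finsupp.mapDomain_zero]
  set g := ψ ∘ Function.invFunOn φ F.support
  have hg : ∀ p ∈ F.support, g (φ p) = ψ p := fun p hp =>
    congrArg ψ (hφ.injOn.leftInvOn_invFunOn hp)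
  have hmap : (F.mapDomain φ).mapDomain g = F.mapDomain ψ := by
    rw [← Finsupp.mapDomain_comp]
    exact Finsupp.mapDomain_congr hg
  rw [← hmap, hM]
  intro a ha b hb hab
  obtain ⟨p, hp, rfl⟩ := mem_image.1 (Finsupp.mapDomain_support ha)
  obtain ⟨p', hp', rfl⟩ := mem_image.1 (Finsupp.mapDomain_support hb)
  rw [hg p hp, hg p' hp']
  exact hψ hp hp' ((hφ.lt_iff_lt hp hp').1 hab)

theorem strictMonoOn_lex_affine {α σ : κ → ℚ} (hα : ∀ j, 0 < α j)
    (hσ : ∀ i j, i < j → σ i + α i ≤ σ j) :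
    StrictMonoOn (fun p : κ ×ₗ ℚ => α (ofLex p).1 * (ofLex p).2 + σ (ofLex p).1)
      {p | (ofLex p).2 ∈ Set.Ico 0 1} := by
  rintro p ⟨-, hp⟩ p' ⟨hp', -⟩ h
  rcases Prod.Lex.lt_iff.1 h with h | ⟨h, h'⟩
  · have hlow := mul_nonneg (hα (ofLex p').1).le hp'
    have hupp := mul_lt_of_lt_one_right (hα (ofLex p).1) hp
    dsimp only
    linarith [hσ _ _ h]
  · dsimp only
    rw [h]
    gcongr
    exact hα _

variable [Fintype κ]

theorem IsSpreading.map_sum_mapDomain_affine_congr {M : Seminorm ℝ (ℚ →₀ ℝ)} (hM : IsSpreading M)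
    {f : κ → ℚ →₀ ℝ} (hf : ∀ j, f j ∈ Finsupp.supported ℝ ℝ (Set.Ico (0 : ℚ) 1))
    {α σ α' σ' : κ → ℚ} (hα : ∀ j, 0 < α j) (hσ : ∀ i j, i < j → σ i + α i ≤ σ j)
    (hα' : ∀ j, 0 < α' j) (hσ' : ∀ i j, i < j → σ' i + α' i ≤ σ' j) :
    M (∑ j, (f j).mapDomain fun r => α j * r + σ j) =
      M (∑ j, (f j).mapDomain fun r => α' j * r + σ' j) := by
  classical
  set F : κ ×ₗ ℚ →₀ ℝ := ∑ j, (f j).mapDomain fun r => toLex (j, r) with hF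
  have hsum (α σ : κ → ℚ) : ∑ j, (f j).mapDomain (fun r => α j * r + σ j) =
      F.mapDomain fun p : κ ×ₗ ℚ => α (ofLex p).1 * (ofLex p).2 + σ (ofLex p).1 := by
    rw [hF, Finsupp.mapDomain_finsetSum]
    simp_rw [← Finsupp.mapDomain_comp]
    rfl
  have hsupp : (F.support : Set (κ ×ₗ ℚ)) ⊆ {p | (ofLex p).2 ∈ Set.Ico 0 1} := by
    intro p hp
    obtain ⟨j, -, hj⟩ := mem_biUnion.1 (Finsupp.support_finsetSum hp)
    obtain ⟨r, hr, rfl⟩ := mem_image.1 (Finsupp.mapDomain_support hj)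
    exact (Finsupp.mem_supported ℝ _).1 (hf j) hr
  rw [hsum, hsum]
  exact hM.map_mapDomain_congr ((strictMonoOn_lex_affine hα hσ).mono hsupp)
    ((strictMonoOn_lex_affine hα' hσ').mono hsupp)

/-- The cone of nonnegative vectors supported in `[0, 1)`. -/
noncomputable def unitCone : PointedCone ℝ (ℚ →₀ ℝ) :=
  PointedCone.positive ℝ (ℚ →₀ ℝ) ⊓
    PointedCone.ofSubmodule (Finsupp.supported ℝ ℝ (Set.Ico (0 : ℚ) 1))

theorem single_mem_unitCone : Finsupp.single 0 1 ∈ unitCone :=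
  ⟨Finsupp.single_nonneg.2 zero_le_one, Finsupp.single_mem_supported ℝ _ (by simp)⟩

theorem mapDomain_mem_unitCone {f : ℚ →₀ ℝ} (hf : f ∈ unitCone) {g : ℚ → ℚ}
    (hg : Set.MapsTo g (Set.Ico 0 1) (Set.Ico 0 1)) : f.mapDomain g ∈ unitCone := by
  classical
  refine ⟨sum_nonneg fun r _ => Finsupp.single_nonneg.2 (hf.1 r), ?_⟩
  refine (Finsupp.mem_supported ℝ _).2 fun r hr => ?_
  obtain ⟨s, hs, rfl⟩ := mem_image.1 (Finsupp.mapDomain_support hr)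
  exact hg ((Finsupp.mem_supported ℝ _).1 hf.2 hs)

/-- The operator `T n` placing `n` compressed copies of `f` next to each other, so that
`T n f` lives on `[0, 1)` when `f` does; here as a multiplicative action of `ℕ`. -/
noncomputable def refinement : ℕ →* Module.End ℝ (ℚ →₀ ℝ) where
  toFun n := ∑ j : Fin n, Finsupp.lmapDomain ℝ ℝ fun r => (r + ((j : ℕ) : ℚ)) / n
  map_one' := by
    ext f
    simp
  map_mul' a b := by
    refine Finsupp.lhom_ext' fun r => LinearMap.ext_ring ?_
    simp only [LinearMap.comp_apply, Finsupp.lsingle_apply, Module.End.mul_apply,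
      LinearMap.sum_apply, Finsupp.lmapDomain_apply, Finsupp.mapDomain_single,
      Finsupp.mapDomain_finsetSum]
    rw [← Fintype.sum_prod_type', ← finProdFinEquiv.sum_comp]
    refine sum_congr rfl fun ⟨i, j⟩ _ => congrArg (Finsupp.single · 1) ?_
    have ha : (a : ℚ) ≠ 0 := Nat.cast_ne_zero.2 i.pos.ne'
    have hb : (b : ℚ) ≠ 0 := Nat.cast_ne_zero.2 j.pos.ne'
    rw [finProdFinEquiv_apply_val]
    push_cast
    field_simp
    ring

theorem refinement_apply (n : ℕ) (f : ℚ →₀ ℝ) :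
    refinement n f = ∑ j : Fin n, f.mapDomain fun r => (r + ((j : ℕ) : ℚ)) / n :=
  LinearMap.sum_apply ..

end Refinement

section RefinementOfSpreading

variable {M : Seminorm ℝ (ℚ →₀ ℝ)}

theorem refinement_mem_unitCone (n : ℕ) {f : ℚ →₀ ℝ} (hf : f ∈ unitCone) :
    refinement n f ∈ unitCone := by
  rw [refinement_apply]
  refine sum_mem fun j _ => mapDomain_mem_unitCone hf fun r hr => ?_
  have hn : (0 : ℚ) < n := Nat.cast_pos.2 j.pos
  have hj : ((j : ℕ) : ℚ) + 1 ≤ n := mod_cast j.isLt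
  exact ⟨div_nonneg (add_nonneg hr.1 (Nat.cast_nonneg _)) hn.le,
    (div_lt_one hn).2 (by linarith [hr.2])⟩

theorem IsUnconditional.isMonotoneOnCone (hM : IsUnconditional M) :
    IsMonotoneOnCone unitCone M := fun x hx y hxy => hM _ _ fun r => by
  have hle : x r ≤ y r := sub_nonneg.1 (hxy.1 r)
  rw [abs_of_nonneg (hx.1 r), abs_of_nonneg ((hx.1 r).trans hle)]
  exact hle

theorem IsSpreading.map_refinement_le (hM : IsSpreading M) (n : ℕ) (f : ℚ →₀ ℝ) :
    M (refinement n f) ≤ n * M f := by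
  rw [refinement_apply]
  refine (le_sum_of_subadditive M (map_zero M).le (map_add_le_add M) _ _).trans_eq ?_
  have hterm (j : Fin n) : M (f.mapDomain fun r => (r + ((j : ℕ) : ℚ)) / n) = M f := by
    refine hM _ _ fun a _ b _ hab => ?_
    have hn : (0 : ℚ) < n := Nat.cast_pos.2 j.pos
    gcongr
  simp [hterm]

theorem IsSpreading.map_refinement_mono (hM : IsSpreading M) (hu : IsUnconditional M) {m n : ℕ}
    (hm : m ≠ 0) (hmn : m ≤ n) {f : ℚ →₀ ℝ} (hf : f ∈ unitCone) :
    M (refinement m f) ≤ M (refinement n f) := by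
  have hm' : (0 : ℚ) < m := mod_cast hm.bot_lt
  have hn' : (0 : ℚ) < n := mod_cast hm.bot_lt.trans_le hmn
  have hnonneg (j : ℕ) : 0 ≤ f.mapDomain fun r => (r + (j : ℚ)) / n :=
    sum_nonneg fun r _ => Finsupp.single_nonneg.2 (hf.1 r)
  have hsep {k : ℚ} (hk : 0 < k) (i j : Fin m) (hij : i < j) :
      k⁻¹ * (i : ℕ) + k⁻¹ ≤ k⁻¹ * (j : ℕ) := by
    have : ((i : ℕ) : ℚ) + 1 ≤ (j : ℕ) := mod_cast hij
    rw [← mul_add_one]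
    gcongr
  calc M (refinement m f)
      = M (∑ j : Fin m, f.mapDomain fun r => (r + ((j : ℕ) : ℚ)) / n) := by
        rw [refinement_apply]
        simp only [div_eq_inv_mul, mul_add]
        exact hM.map_sum_mapDomain_affine_congr (fun _ => hf.2) (fun _ => inv_pos.2 hm')
          (hsep hm') (fun _ => inv_pos.2 hn') (hsep hn')
    _ = M (∑ j ∈ range m, f.mapDomain fun r => (r + (j : ℚ)) / n) := by
        rw [Fin.sum_univ_eq_sum_range fun j => f.mapDomain fun r => (r + (j : ℚ)) / n]
    _ ≤ M (∑ j ∈ range n, f.mapDomain fun r => (r + (j : ℚ)) / n) := by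
        refine hu _ _ fun r => abs_le_abs_of_nonneg (sum_nonneg fun j _ => hnonneg j) ?_ r
        exact sum_le_sum_of_subset_of_nonneg (range_mono hmn) fun j _ _ => hnonneg j
    _ = M (refinement n f) := by
        rw [refinement_apply,
          Fin.sum_univ_eq_sum_range fun j => f.mapDomain fun r => (r + (j : ℚ)) / n]

theorem IsSpreading.isDilationAction_refinement (hM : IsSpreading M) (hu : IsUnconditional M) :
    IsDilationAction unitCone M refinement where
  isMonotoneOnCone := hu.isMonotoneOnCone
  apply_mem n _ := refinement_mem_unitCone n
  apply_le := hM.map_refinement_le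
  apply_mono hm hmn := hM.map_refinement_mono hu hm hmn

/-- Translation by `j`; the translates of a vector of `unitCone` are successive blocks. -/
noncomputable def translate (j : ℕ) : (ℚ →₀ ℝ) →ₗ[ℝ] (ℚ →₀ ℝ) :=
  Finsupp.lmapDomain ℝ ℝ (· + (j : ℚ))

theorem translate_apply (j : ℕ) (f : ℚ →₀ ℝ) : translate j f = f.mapDomain (· + (j : ℚ)) :=
  rfl

theorem IsSpreading.map_translate (hM : IsSpreading M) (j : ℕ) (f : ℚ →₀ ℝ) :
    M (translate j f) = M f :=
  hM f _ fun _ _ _ _ h => by simpa using h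

theorem mem_Ico_of_mem_support_translate {f : ℚ →₀ ℝ} (hf : f ∈ unitCone) {j : ℕ} {r : ℚ}
    (hr : r ∈ (translate j f).support) : r ∈ Set.Ico (j : ℚ) (j + 1) := by
  classical
  obtain ⟨s, hs, rfl⟩ := mem_image.1 (Finsupp.mapDomain_support hr)
  obtain ⟨h0, h1⟩ := (Finsupp.mem_supported ℝ _).1 hf.2 hs
  constructor <;> linarith

theorem isBlockSequence_translate {f : ℚ →₀ ℝ} (hf : f ∈ unitCone) (n : ℕ) :
    IsBlockSequence fun j : Fin n => translate j f := fun j j' hjj' a ha b hb => by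
  have hlt : ((j : ℕ) : ℚ) + 1 ≤ (j' : ℕ) := mod_cast hjj'
  linarith [(mem_Ico_of_mem_support_translate hf ha).2,
    (mem_Ico_of_mem_support_translate hf hb).1]

theorem refinement_sum {n : ℕ} (a : Fin n → ℕ) (f : ℚ →₀ ℝ) :
    refinement (∑ j, a j) f = ∑ j, ∑ i : Fin (a j),
      f.mapDomain fun r => (r + ((∑ k ∈ Iio j, a k + i : ℕ) : ℚ)) / (∑ j, a j : ℕ) := by
  rw [refinement_apply, ← finSigmaFinEquiv.sum_comp, Fintype.sum_sigma]
  have hIio (j : Fin n) : ∑ k : Fin j, a (Fin.castLE j.2.le k) = ∑ k ∈ Iio j, a k := by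
    refine sum_nbij (Fin.castLE j.2.le) (fun k _ => mem_Iio.2 k.2)
      (Fin.castLE_injective _).injOn
      (fun k hk => ⟨⟨k, Fin.lt_def.1 (mem_Iio.1 hk)⟩, mem_univ _, rfl⟩)
      fun _ _ => rfl
  simp_rw [finSigmaFinEquiv_apply, hIio]

theorem IsSpreading.map_sum_translate_refinement (hM : IsSpreading M) {f : ℚ →₀ ℝ}
    (hf : f ∈ unitCone) {n : ℕ} {a : Fin n → ℕ} (ha : ∀ j, 0 < a j) :
    M (∑ j : Fin n, translate j (refinement (a j) f)) = M (refinement (∑ j, a j) f) := by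
  set N := ∑ j, a j with hN_def
  have hmem (j : Fin n) : refinement (a j) f ∈ Finsupp.supported ℝ ℝ (Set.Ico (0 : ℚ) 1) :=
    (refinement_mem_unitCone (a j) hf).2
  have hN (j : Fin n) : (0 : ℚ) < N :=
    mod_cast sum_pos (fun j _ => ha j) ⟨j, mem_univ j⟩
  calc M (∑ j : Fin n, translate j (refinement (a j) f))
      = M (∑ j, (refinement (a j) f).mapDomain fun r => 1 * r + ((j : ℕ) : ℚ)) := by
        simp only [translate_apply, one_mul]
    _ = M (∑ j, (refinement (a j) f).mapDomain
          fun r => (a j / N : ℚ) * r + (∑ k ∈ Iio j, a k : ℕ) / N) := by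
        refine hM.map_sum_mapDomain_affine_congr hmem (fun _ => one_pos)
          (fun i j hij => mod_cast hij) (fun j => div_pos (mod_cast ha j) (hN j))
          fun i j hij => ?_
        rw [← add_div, ← Nat.cast_add, sum_Iio_add_eq_sum_Iic]
        have := hN i
        gcongr
        exact fun k hk => mem_Iio.2 ((mem_Iic.1 hk).trans_lt hij)
    _ = M (refinement N f) := by
        rw [hN_def, refinement_sum, ← hN_def]
        refine congrArg M (sum_congr rfl fun j _ => ?_)
        simp_rw [refinement_apply, Finsupp.mapDomain_finsetSum, ← Finsupp.mapDomain_comp]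
        refine sum_congr rfl fun i _ => congrArg (f.mapDomain ·) (funext fun r => ?_)
        have haj : (a j : ℚ) ≠ 0 := mod_cast (ha j).ne'
        simp only [Function.comp_apply]
        rw [Nat.cast_add]
        field_simp
        ring

end RefinementOfSpreading

section Characterization

variable {n : ℕ} {S : Seminorm ℝ (Fin n → ℝ)} {θ : ℝ}

theorem seminorm_eq_norm_of_mono (hS : ∀ c d : Fin n → ℝ, (∀ j, |c j| ≤ |d j|) → S c ≤ S d)
    (hsingle : ∀ j, S (Pi.single j 1) = 1) (hone : S 1 ≤ 1) (c : Fin n → ℝ) : S c = ‖c‖ := by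
  refine le_antisymm ?_ ((pi_norm_le_iff_of_nonneg (apply_nonneg _ _)).2 fun j => ?_)
  · calc S c ≤ S (‖c‖ • 1) := hS _ _ fun j => by simpa using norm_le_pi_norm c j
      _ = ‖c‖ * S 1 := by rw [map_smul_eq_mul, norm_norm]
      _ ≤ ‖c‖ := mul_le_of_le_one_right (norm_nonneg c) hone
  · calc ‖c j‖ = S (c j • Pi.single j 1) := by rw [map_smul_eq_mul, hsingle, mul_one]
      _ ≤ S c := hS _ _ fun i => by
        obtain rfl | hij := eq_or_ne i j <;> simp [*]

theorem seminorm_rpow_eq_of_natCast (hθ : 0 < θ)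
    (hS : ∀ a : Fin n → ℕ, (∀ j, 0 < a j) → S (fun j => (a j : ℝ) ^ θ) = (∑ j, (a j : ℝ)) ^ θ)
    {t : Fin n → ℝ} (ht : ∀ j, 0 ≤ t j) : S (fun j => t j ^ θ) = (∑ j, t j) ^ θ := by
  have hlim (j : Fin n) :
      Tendsto (fun k : ℕ => ((⌊t j * k⌋₊ + 1 : ℕ) : ℝ) / k) atTop (𝓝 (t j)) := by
    simpa [add_div, Function.comp_def] using
      ((tendsto_nat_floor_mul_div_atTop (ht j)).comp tendsto_natCast_atTop_atTop).add
        (tendsto_one_div_atTop_nhds_zero_nat (𝕜 := ℝ))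
  have hrat (k : ℕ) : S (fun j => (((⌊t j * k⌋₊ + 1 : ℕ) : ℝ) / k) ^ θ) =
      (∑ j, ((⌊t j * k⌋₊ + 1 : ℕ) : ℝ) / k) ^ θ := by
    have hk : (0 : ℝ) ≤ k := k.cast_nonneg
    rw [← sum_div, Real.div_rpow (by positivity) hk, ← hS _ fun j => Nat.succ_pos _,
      div_eq_inv_mul, ← abs_of_nonneg (inv_nonneg.2 (Real.rpow_nonneg hk θ)), ← Real.norm_eq_abs,
      ← map_smul_eq_mul]
    congr 1
    ext j
    rw [Pi.smul_apply, smul_eq_mul, Real.div_rpow (by positivity) hk, div_eq_inv_mul]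
  have hcont : Continuous S :=
    continuousOn_univ.1 (S.convexOn.continuousOn isOpen_univ)
  exact tendsto_nhds_unique
    ((hcont.tendsto _).comp (tendsto_pi_nhds.2 fun j => (hlim j).rpow_const (Or.inr hθ.le)))
    (((tendsto_finsetSum _ fun j _ => hlim j).rpow_const (Or.inr hθ.le)).congr
      fun k => (hrat k).symm)

theorem seminorm_eq_ellNorm_of_pos (hθ : 0 < θ)
    (hmono : ∀ c d : Fin n → ℝ, (∀ j, |c j| ≤ |d j|) → S c ≤ S d)
    (hS : ∀ a : Fin n → ℕ, (∀ j, 0 < a j) → S (fun j => (a j : ℝ) ^ θ) = (∑ j, (a j : ℝ)) ^ θ)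
    (c : Fin n → ℝ) : S c = ellNorm θ c := by
  have hpow (j : Fin n) : (|c j| ^ (1 / θ)) ^ θ = |c j| := by
    rw [← Real.rpow_mul (abs_nonneg _), one_div_mul_cancel hθ.ne', Real.rpow_one]
  calc S c = S (fun j => |c j|) :=
        le_antisymm (hmono _ _ fun j => (abs_abs (c j)).ge) (hmono _ _ fun j => (abs_abs (c j)).le)
    _ = S (fun j => (|c j| ^ (1 / θ)) ^ θ) := by simp only [hpow]
    _ = (∑ j, |c j| ^ (1 / θ)) ^ θ :=
        seminorm_rpow_eq_of_natCast hθ hS fun j => Real.rpow_nonneg (abs_nonneg _) _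
    _ = ellNorm θ c := (ellNorm_of_pos hθ c).symm

theorem seminorm_eq_ellNorm (hθ : 0 ≤ θ)
    (hmono : ∀ c d : Fin n → ℝ, (∀ j, |c j| ≤ |d j|) → S c ≤ S d)
    (hsingle : ∀ j, S (Pi.single j 1) = 1)
    (hS : ∀ a : Fin n → ℕ, (∀ j, 0 < a j) → S (fun j => (a j : ℝ) ^ θ) = (∑ j, (a j : ℝ)) ^ θ)
    (c : Fin n → ℝ) : S c = ellNorm θ c := by
  obtain rfl | hθ := hθ.eq_or_lt
  · have hone : S 1 = 1 := by simpa [Pi.one_def] using hS 1 fun _ => one_pos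
    rw [ellNorm_zero, seminorm_eq_norm_of_mono hmono hsingle hone.le]
  · exact seminorm_eq_ellNorm_of_pos hθ hmono hS c

end Characterization

section Lemberg

theorem IsUnconditional.map_sum_smul_le {ι : Type*} [LinearOrder ι] {M : Seminorm ℝ (ι →₀ ℝ)}
    (hM : IsUnconditional M) {n : ℕ} {y : Fin n → ι →₀ ℝ} (hy : IsBlockSequence y)
    {c d : Fin n → ℝ} (h : ∀ j, |c j| ≤ |d j|) : M (∑ j, c j • y j) ≤ M (∑ j, d j • y j) := by
  refine hM _ _ fun r => ?_
  have happly (e : Fin n → ℝ) : (∑ j, e j • y j) r = ∑ j, e j * y j r := by simp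
  rw [happly, happly]
  by_cases hr : ∃ j, r ∈ (y j).support
  · obtain ⟨j, hj⟩ := hr
    have hsum (e : Fin n → ℝ) : ∑ i, e i * y i r = e j * y j r :=
      sum_eq_single_of_mem j (mem_univ j) fun i _ hij => by
        refine mul_eq_zero_of_right _ (Finsupp.notMem_support_iff.1 fun hi => ?_)
        rcases hij.lt_or_gt with hij | hij
        · exact (hy i j hij r hi r hj).false
        · exact (hy j i hij r hj r hi).false
    rw [hsum, hsum, abs_mul, abs_mul]
    exact mul_le_mul_of_nonneg_right (h j) (abs_nonneg _)
  · push Not at hr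
    simp [fun j => Finsupp.notMem_support_iff.1 (hr j)]

theorem HasApproxEigenvectors.exists_eq_one {E : Type*} [AddCommGroup E] [Module ℝ E]
    {C : PointedCone ℝ E} {M : Seminorm ℝ E} {T : ℕ →* Module.End ℝ E} {θ : ℝ} {Q : ℕ}
    (h : HasApproxEigenvectors C M T θ Q) {δ : ℝ} (hδ : 0 < δ) :
    ∃ y ∈ C, M y = 1 ∧ ∀ q ∈ Icc 1 Q, M (T q y - (q : ℝ) ^ θ • y) ≤ δ := by
  obtain ⟨y, hyC, hy, hyQ⟩ := h δ hδ
  have hinv : ‖(M y)⁻¹‖ = (M y)⁻¹ := Real.norm_of_nonneg (inv_pos.2 hy).le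
  refine ⟨(M y)⁻¹ • y, C.smul_mem (inv_pos.2 hy).le hyC, ?_, fun q hq => ?_⟩
  · rw [map_smul_eq_mul, hinv, inv_mul_cancel₀ hy.ne']
  · rw [map_smul, smul_comm, ← smul_sub, map_smul_eq_mul, hinv, inv_mul_le_iff₀ hy, mul_comm]
    exact hyQ q hq

variable {M : Seminorm ℝ (ℚ →₀ ℝ)} {θ : ℝ}

theorem IsSpreading.abs_map_sum_rpow_smul_translate_sub_le (hM : IsSpreading M) {n Q : ℕ} {δ : ℝ}
    {f : ℚ →₀ ℝ} (hf : f ∈ unitCone)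
    (hfQ : ∀ q ∈ Icc 1 Q, M (refinement q f - (q : ℝ) ^ θ • f) ≤ δ) {a : Fin (n + 1) → ℕ}
    (ha : ∀ j, 0 < a j) (haQ : ∑ j, a j ≤ Q) :
    |M (∑ j : Fin (n + 1), (a j : ℝ) ^ θ • translate j f) - (∑ j, (a j : ℝ)) ^ θ * M f| ≤
      (n + 2) * δ := by
  set N := ∑ j, a j with hN_def
  have haN (j : Fin (n + 1)) : a j ≤ N := single_le_sum (fun _ _ => Nat.zero_le _) (mem_univ j)
  have hcast : (∑ j, (a j : ℝ)) ^ θ * M f = M ((N : ℝ) ^ θ • f) := by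
    rw [map_smul_eq_mul, Real.norm_of_nonneg (by positivity), hN_def, Nat.cast_sum]
  have hblocks : |M (∑ j : Fin (n + 1), (a j : ℝ) ^ θ • translate j f) - M (refinement N f)| ≤
      (n + 1) * δ :=
    calc _ = |M (∑ j : Fin (n + 1), translate j ((a j : ℝ) ^ θ • f)) -
          M (∑ j : Fin (n + 1), translate j (refinement (a j) f))| := by
          simp_rw [hM.map_sum_translate_refinement hf ha, map_smul, hN_def]
      _ ≤ M (∑ j : Fin (n + 1), translate j ((a j : ℝ) ^ θ • f - refinement (a j) f)) := by
          simp_rw [map_sub, sum_sub_distrib]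
          exact abs_sub_map_le_sub ..
      _ ≤ ∑ _j : Fin (n + 1), δ :=
          (le_sum_of_subadditive M (map_zero M).le (map_add_le_add M) _ _).trans <|
            sum_le_sum fun j _ => by
              rw [hM.map_translate, map_sub_rev]
              exact hfQ _ (mem_Icc.2 ⟨ha j, (haN j).trans haQ⟩)
      _ = (n + 1) * δ := by simp
  have hwhole : |M (refinement N f) - M ((N : ℝ) ^ θ • f)| ≤ δ :=
    (abs_sub_map_le_sub ..).trans (hfQ N (mem_Icc.2 ⟨(ha 0).trans_le (haN 0), haQ⟩))
  rw [hcast]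
  linarith [abs_sub_le (M (∑ j : Fin (n + 1), (a j : ℝ) ^ θ • translate j f))
    (M (refinement N f)) (M ((N : ℝ) ^ θ • f))]

theorem IsSpreading.tendsto_map_sum_smul_translate (hM : IsSpreading M) (hu : IsUnconditional M)
    (hθ : 0 ≤ θ) {f : ℕ → ℚ →₀ ℝ} (hf : ∀ k, f k ∈ unitCone) (hf1 : ∀ k, M (f k) = 1)
    (hfQ : ∀ k, ∀ q ∈ Icc 1 k, M (refinement q (f k) - (q : ℝ) ^ θ • f k) ≤ 1 / ((k : ℝ) + 1))
    (n : ℕ) (c : Fin (n + 1) → ℝ) :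
    Tendsto (fun k => M (∑ j : Fin (n + 1), c j • translate j (f k))) (hyperfilter ℕ)
      (𝓝 (ellNorm θ c)) := by
  set s : ℕ → Seminorm ℝ (Fin (n + 1) → ℝ) := fun k =>
    M.comp (Fintype.linearCombination ℝ fun j : Fin (n + 1) => translate j (f k))
  have hsingle (k : ℕ) (j : Fin (n + 1)) : s k (Pi.single j 1) = 1 := by
    rw [Seminorm.comp_apply, Fintype.linearCombination_apply_single, one_smul, hM.map_translate,
      hf1]
  obtain ⟨S, hS⟩ := exists_seminorm_tendsto_of_eventually_le (s := s) (hyperfilter ℕ) fun c =>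
    ⟨_, Eventually.of_forall fun k => (seminorm_le_sum_single_mul_norm (s k) c).trans_eq <| by
      simp only [hsingle]; rfl⟩
  suffices S c = ellNorm θ c from this ▸ hS c
  refine seminorm_eq_ellNorm hθ (fun c d hcd => ?_) (fun j => ?_) (fun a ha => ?_) c
  · exact le_of_tendsto_of_tendsto' (hS c) (hS d) fun k =>
      hu.map_sum_smul_le (isBlockSequence_translate (hf k) _) hcd
  · exact tendsto_nhds_unique (hS _) (by simp only [hsingle, tendsto_const_nhds])
  · have hle : ∀ᶠ k in (hyperfilter ℕ : Filter ℕ),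
        |s k (fun j => (a j : ℝ) ^ θ) - (∑ j, (a j : ℝ)) ^ θ| ≤ (n + 2) * (1 / ((k : ℝ) + 1)) := by
      filter_upwards [Nat.hyperfilter_le_atTop (eventually_ge_atTop (∑ j, a j))] with k hk
      have habs := hM.abs_map_sum_rpow_smul_translate_sub_le (hf k) (hfQ k) ha hk
      rwa [hf1, mul_one] at habs
    have hzero : Tendsto (fun k : ℕ => ((n : ℝ) + 2) * (1 / ((k : ℝ) + 1))) (hyperfilter ℕ)
        (𝓝 0) := by
      simpa using ((tendsto_one_div_add_atTop_nhds_zero_nat (𝕜 := ℝ)).const_mul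
        ((n : ℝ) + 2)).mono_left Nat.hyperfilter_le_atTop
    exact tendsto_nhds_unique (hS _) (tendsto_iff_norm_sub_tendsto_zero.2
      (squeeze_zero' (Eventually.of_forall fun _ => norm_nonneg _) hle hzero))

theorem IsSpreading.exists_blockRepresents_of_isUnconditional (hM : IsSpreading M)
    (hu : IsUnconditional M) (h0 : 0 < M (Finsupp.single 0 1)) :
    ∃ θ ∈ Set.Icc (0 : ℝ) 1, BlockRepresents M θ := by
  obtain ⟨θ, hθ, h⟩ :=
    (hM.isDilationAction_refinement hu).exists_hasApproxEigenvectors single_mem_unitCone h0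
  refine ⟨θ, hθ, fun n η hη => ?_⟩
  choose f hf hf1 hfQ using fun k => (h k).exists_eq_one (Nat.one_div_pos_of_nat (n := k))
  suffices hex : ∃ k, ∀ c : Fin n → ℝ,
      |M (∑ j : Fin n, c j • translate j (f k)) - ellNorm θ c| ≤ η * ‖c‖ by
    obtain ⟨k, hk⟩ := hex
    exact ⟨_, isBlockSequence_translate (hf k) n, fun c => (hk c).trans <|
      mul_le_mul_of_nonneg_left (norm_le_ellNorm hθ.1 c) hη.le⟩
  cases n with
  | zero =>
    refine ⟨0, fun c => ?_⟩
    have hnorm : ‖c‖ = 0 := norm_of_subsingleton c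
    have hell : ellNorm θ c = 0 := (ellNorm_nonneg θ c).antisymm' <| by
      simpa only [hnorm, mul_zero] using ellNorm_le_rpow_mul_norm hθ.1 c
    simp [hnorm, hell]
  | succ n =>
    have hlim := hM.tendsto_map_sum_smul_translate hu hθ.1 hf hf1 hfQ n
    obtain ⟨S, hS⟩ := exists_seminorm_of_tendsto (l := (hyperfilter ℕ : Filter ℕ))
      (s := fun k => M.comp
        (Fintype.linearCombination ℝ fun j : Fin (n + 1) => translate j (f k)))
      fun c => ⟨_, hlim c⟩
    have hSθ (c : Fin (n + 1) → ℝ) : S c = ellNorm θ c := tendsto_nhds_unique (hS c) (hlim c)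
    obtain ⟨k, hk⟩ := (eventually_abs_sub_le_mul_norm hS hη).exists
    exact ⟨k, fun c => hSθ c ▸ hk c⟩

end Lemberg

section Uniformity

variable {C δ : ℝ}

theorem exists_blockRepresents {N : Seminorm ℝ (ℕ →₀ ℝ)} (hC : ∀ i, N (Finsupp.single i 1) ≤ C)
    (hδ : 0 < δ) (hsep : ∀ i j, i < j → δ ≤ N (Finsupp.single i 1 - Finsupp.single j 1)) :
    ∃ θ ∈ Set.Icc (0 : ℝ) 1, BlockRepresents N θ := by
  obtain ⟨F, W, _, hF, hW, hlim⟩ := exists_spreading_model (κ := (ℚ ×ₗ ℕ) ×ₗ ℕ) hC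
  have hFsep {a b : (ℚ ×ₗ ℕ) ×ₗ ℕ} (hab : a < b) :
      δ ≤ F (Finsupp.single a 1 - Finsupp.single b 1) := by
    refine ge_of_tendsto (hlim _) ((hW {a, b}).mono fun g hg => ?_)
    rw [← Finsupp.lmapDomain_apply ℝ ℝ g, map_sub]
    simp only [Finsupp.lmapDomain_apply, Finsupp.mapDomain_single]
    exact hsep _ _ (hg (by simp) (by simp) hab)
  obtain ⟨S, hS, hSu, hS1, hSF⟩ := (hF.comp_blockMap diffBlock).exists_isUnconditional
    hF.isSuppressionUnconditional_comp_diffBlock fun p => by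
      rw [comp_blockMap_diffBlock_single]
      exact hδ.trans_le (hFsep (Prod.Lex.lt_iff.2 (Or.inr ⟨rfl, one_pos⟩)))
  obtain ⟨θ, hθ, hSθ⟩ := hS.exists_blockRepresents_of_isUnconditional hSu ((hS1 0).symm ▸ one_pos)
  have hFθ : BlockRepresents F θ := (hSF θ hθ.1 hSθ).of_comp fun _ hy => hy.map_blockMap _
  refine ⟨θ, hθ, hFθ.of_tendsto_comp (Φ := fun g => Finsupp.lmapDomain ℝ ℝ g) hθ.1 hlim
    fun y hy => (hW (univ.biUnion fun j => (y j).support)).mono fun g hg => hy.mapDomain ?_⟩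
  simpa using hg

theorem BlockRepresents.exists_eventually_le_and_le {ι α : Type*} [LinearOrder ι]
    {M : Seminorm ℝ (ι →₀ ℝ)} {θ : ℝ} (hM : BlockRepresents M θ) (hθ : 0 ≤ θ) {W : Filter α}
    {s : α → Seminorm ℝ (ι →₀ ℝ)} (h : ∀ f, Tendsto (s · f) W (𝓝 (M f))) (n : ℕ) {ε : ℝ}
    (hε : 0 < ε) : ∃ y : Fin n → ι →₀ ℝ, IsBlockSequence y ∧ ∀ᶠ a in W, ∀ c : Fin n → ℝ,
      ellNorm θ c ≤ s a (∑ j, c j • y j) ∧ s a (∑ j, c j • y j) ≤ (1 + ε) * ellNorm θ c := by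
  obtain ⟨y, hy, hyW⟩ := hM.exists_eventually hθ h n (η := ε / (2 + ε)) (by positivity)
  set t : ℝ := (2 + ε) / 2
  have ht : 0 < t := by positivity
  refine ⟨fun j => t • y j, fun j j' hjj' a ha b hb =>
    hy j j' hjj' a (Finsupp.support_smul ha) b (Finsupp.support_smul hb), hyW.mono fun a ha c => ?_⟩
  obtain ⟨hlow, hupp⟩ := abs_le.1 (ha c)
  have hscale : s a (∑ j, c j • t • y j) = t * s a (∑ j, c j • y j) := by
    simp_rw [smul_comm _ t, ← smul_sum]
    rw [map_smul_eq_mul, Real.norm_of_nonneg ht.le]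
  have htlow : t * (1 - ε / (2 + ε)) = 1 := by simp only [t]; field_simp; ring
  have htupp : t * (1 + ε / (2 + ε)) = 1 + ε := by simp only [t]; field_simp; ring
  rw [hscale]
  constructor
  · calc ellNorm θ c = t * (ellNorm θ c - ε / (2 + ε) * ellNorm θ c) := by
          rw [← one_sub_mul, ← mul_assoc, htlow, one_mul]
      _ ≤ _ := by gcongr; linarith
  · calc _ ≤ t * (ellNorm θ c + ε / (2 + ε) * ellNorm θ c) := by gcongr; linarith
      _ = (1 + ε) * ellNorm θ c := by rw [← one_add_mul, ← mul_assoc, htupp]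

theorem exists_finset_forall_seminorm_exists_isBlockSequence (C : ℝ) (hδ : 0 < δ) (n : ℕ) {ε : ℝ}
    (hε : 0 < ε) : ∃ (m : ℕ) (T : Finset ℝ), (∀ θ ∈ T, θ ∈ Set.Icc 0 1) ∧
      ∀ N : Seminorm ℝ (ℕ →₀ ℝ), (∀ i < m, N (Finsupp.single i 1) ≤ C) →
        (∀ i j, i < j → j < m → δ ≤ N (Finsupp.single i 1 - Finsupp.single j 1)) →
        ∃ θ ∈ T, ∃ y : Fin n → ℕ →₀ ℝ, IsBlockSequence y ∧ (∀ j, ∀ i ∈ (y j).support, i < m) ∧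
          ∀ c : Fin n → ℝ,
            ellNorm θ c ≤ N (∑ j, c j • y j) ∧ N (∑ j, c j • y j) ≤ (1 + ε) * ellNorm θ c := by
  obtain ⟨η, hη, hηε⟩ : ∃ η > 0, (1 + η) * (1 + η) ≤ 1 + ε :=
    ⟨min ε 1 / 3, by positivity, by
      nlinarith [min_le_left ε 1, min_le_right ε 1, lt_min hε one_pos]⟩
  obtain ⟨T, hT, hnet⟩ := exists_finset_ellNorm_net n hη
  by_contra! hbad
  choose N hNC hNsep hN using fun m => hbad m T hT
  have hlt (b : ℕ) : ∀ᶠ m in (hyperfilter ℕ : Filter ℕ), b < m :=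
    Nat.hyperfilter_le_atTop (eventually_gt_atTop b)
  have hsupp (f : ℕ →₀ ℝ) : ∀ᶠ m in (hyperfilter ℕ : Filter ℕ), ∀ i ∈ f.support, i < m :=
    (eventually_all_finset _).2 fun i _ => hlt i
  obtain ⟨L, hL⟩ := exists_seminorm_tendsto_of_eventually_le (s := N) (hyperfilter ℕ) fun f =>
    ⟨∑ i ∈ f.support, |f i| * C, (hsupp f).mono fun m hm => (seminorm_le_sum_abs_mul _ f).trans <|
      sum_le_sum fun i hi => mul_le_mul_of_nonneg_left (hNC m i (hm i hi)) (abs_nonneg _)⟩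
  obtain ⟨θ, hθ, hLθ⟩ := exists_blockRepresents (N := L)
    (fun i => le_of_tendsto (hL _) ((hlt i).mono fun m hm => hNC m i hm)) hδ
    fun i j hij => ge_of_tendsto (hL _) ((hlt j).mono fun m hm => hNsep m i j hij hm)
  obtain ⟨θ', hθ', hell⟩ := hnet θ hθ
  obtain ⟨y, hy, hyN⟩ := hLθ.exists_eventually_le_and_le hθ.1 hL n hη
  obtain ⟨m, hm, hym⟩ := (hyN.and (eventually_all.2 fun j => hsupp (y j))).exists
  obtain ⟨c, hc⟩ := hN m θ' hθ' y hy hym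
  refine (hc ((hell c).1.trans (hm c).1)).not_ge ?_
  calc N m (∑ j, c j • y j) ≤ (1 + η) * ellNorm θ c := (hm c).2
    _ ≤ (1 + η) * ((1 + η) * ellNorm θ' c) := by gcongr; exact (hell c).2
    _ ≤ (1 + ε) * ellNorm θ' c := by
      rw [← mul_assoc]
      exact mul_le_mul_of_nonneg_right hηε (ellNorm_nonneg _ _)

theorem IsBlockSequence.exists_support_subset_Ico {n m : ℕ} {y : Fin n → ℕ →₀ ℝ}
    (hy : IsBlockSequence y) (h0 : ∀ j, y j ≠ 0) (hm : ∀ j, ∀ i ∈ (y j).support, i < m) :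
    ∃ q : Fin (n + 1) → ℕ, StrictMono q ∧ q (Fin.last n) ≤ m ∧
      ∀ j, (y j).support ⊆ Ico (q j.castSucc) (q j.succ) := by
  set q : Fin (n + 1) → ℕ := fun t =>
    {j : Fin n | j.castSucc < t}.toFinset.sup fun j => (y j).support.sup (· + 1)
  have hsub (j : Fin n) : (y j).support ⊆ Ico (q j.castSucc) (q j.succ) := by
    intro i hi
    refine mem_Ico.2 ⟨Finset.sup_le fun k hk => Finset.sup_le fun a ha => ?_, ?_⟩
    · exact hy k j (by simpa using hk) a ha i hi
    · calc i < (y j).support.sup (· + 1) := le_sup (f := (· + 1)) hi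
        _ ≤ q j.succ := le_sup (f := fun j => (y j).support.sup (· + 1)) (by simp)
  refine ⟨q, Fin.strictMono_iff_lt_succ.2 fun j => ?_,
    Finset.sup_le fun j _ => Finset.sup_le (hm j), hsub⟩
  obtain ⟨i, hi⟩ := Finsupp.support_nonempty_iff.2 (h0 j)
  exact (mem_Ico.1 (hsub j hi)).1.trans_lt (mem_Ico.1 (hsub j hi)).2

theorem sum_Ico_smul_eq_linearCombination {n : ℕ} {y : Fin n → ℕ →₀ ℝ} {q : Fin (n + 1) → ℕ}
    (hq : Monotone q) (hy : ∀ j, (y j).support ⊆ Ico (q j.castSucc) (q j.succ)) {X : Type*}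
    [AddCommGroup X] [Module ℝ X] (x : ℕ → X) (j : Fin n) :
    ∑ i ∈ Ico (q j.castSucc) (q j.succ), (∑ k, y k i) • x i =
      Finsupp.linearCombination ℝ x (y j) := by
  rw [Finsupp.linearCombination_apply, Finsupp.sum_of_support_subset _ (hy j) _ (by simp)]
  refine sum_congr rfl fun i hi => congrArg (· • x i) ?_
  refine sum_eq_single j (fun k _ hkj => ?_) (by simp)
  by_contra hki
  have hk := mem_Ico.1 (hy k (Finsupp.mem_support_iff.2 hki))
  rw [mem_Ico] at hi
  rcases hkj.lt_or_gt with h | h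
  · exact (hk.2.trans_le (hq (Fin.succ_le_castSucc_iff.2 h))).not_ge hi.1
  · exact (hi.2.trans_le (hq (Fin.succ_le_castSucc_iff.2 h))).not_ge hk.1

theorem ne_zero_of_ellNorm_le {n : ℕ} {θ : ℝ} {N : Seminorm ℝ (ℕ →₀ ℝ)} {y : Fin n → ℕ →₀ ℝ}
    (hθ : 0 ≤ θ) (h : ∀ c : Fin n → ℝ, ellNorm θ c ≤ N (∑ j, c j • y j)) (j : Fin n) :
    y j ≠ 0 := by
  intro hj
  have hzero : ∑ i, (Pi.single j 1 : Fin n → ℝ) i • y i = 0 := by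
    simp [Pi.single_apply, hj]
  have hone : (1 : ℝ) ≤ ‖(Pi.single j 1 : Fin n → ℝ)‖ := by
    simpa using norm_le_pi_norm (Pi.single j 1 : Fin n → ℝ) j
  have := (norm_le_ellNorm hθ _).trans (h (Pi.single j 1))
  rw [hzero, map_zero] at this
  linarith

theorem inv_le_norm_sub_of_norm_sum_range_le {X : Type*} [SeminormedAddCommGroup X]
    [NormedSpace ℝ X] {K : ℝ} (hK : 0 < K) {m : ℕ} {x : ℕ → X} (hx : ∀ i < m, ‖x i‖ = 1)
    (hbasic : ∀ (a : ℕ → ℝ) (k : ℕ), k ≤ m →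
      ‖∑ i ∈ range k, a i • x i‖ ≤ K * ‖∑ i ∈ range m, a i • x i‖)
    {i j : ℕ} (hij : i < j) (hj : j < m) : K⁻¹ ≤ ‖x i - x j‖ := by
  have hi : i < m := hij.trans hj
  have hle := hbasic (Pi.single i 1 - Pi.single j 1) (i + 1) hi
  have hsum (k : ℕ) : ∑ t ∈ range k, (Pi.single i 1 - Pi.single j 1 : ℕ → ℝ) t • x t =
      (if i < k then x i else 0) - if j < k then x j else 0 := by
    simp [sub_smul, sum_sub_distrib, Pi.single_apply, ite_smul]
  rw [hsum, hsum, if_pos i.lt_succ_self, if_neg (Nat.lt_succ_iff.not.2 hij.not_ge), sub_zero,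
    if_pos hi, if_pos hj, hx i hi] at hle
  rwa [inv_le_iff_one_le_mul₀' hK]

end Uniformity

end Krivine

theorem uniform_krivine_general (C : ℝ) {δ : ℝ} (hδ : 0 < δ) (n : ℕ) {ε : ℝ} (hε : 0 < ε) :
    ∃ (m : ℕ) (I : Finset ℝ≥0∞), (∀ p ∈ I, 1 ≤ p) ∧
      ∀ (X : Type*) [SeminormedAddCommGroup X] [NormedSpace ℝ X] (x : ℕ → X),
        (∀ i < m, ‖x i‖ ≤ C) → (∀ i j, i < j → j < m → δ ≤ ‖x i - x j‖) →
        ∃ p ∈ I, ∃ q : Fin (n + 1) → ℕ, StrictMono q ∧ q (Fin.last n) ≤ m ∧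
          ∃ b : ℕ → ℝ,
            ∀ c : Fin n → ℝ,
              lpNorm p c ≤
                  ‖∑ j : Fin n, c j •
                    ∑ i ∈ Finset.Ico (q j.castSucc) (q j.succ), b i • x i‖ ∧
                ‖∑ j : Fin n, c j •
                    ∑ i ∈ Finset.Ico (q j.castSucc) (q j.succ), b i • x i‖ ≤
                  (1 + ε) * lpNorm p c := by
  obtain ⟨m, T, hT, hm⟩ :=
    Krivine.exists_finset_forall_seminorm_exists_isBlockSequence C hδ n hε
  refine ⟨m, T.image fun θ => (ENNReal.ofReal θ)⁻¹, by simpa using fun θ hθ => (hT θ hθ).2,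
    fun X _ _ x hxC hxδ => ?_⟩
  obtain ⟨θ, hθ, y, hy, hym, hyN⟩ := hm
    ((normSeminorm ℝ X).comp (Finsupp.linearCombination ℝ x)) (by simpa using hxC)
    (by simpa using hxδ)
  have hy0 := Krivine.ne_zero_of_ellNorm_le (hT θ hθ).1 fun c => (hyN c).1
  obtain ⟨q, hq, hqm, hyq⟩ := hy.exists_support_subset_Ico hy0 hym
  refine ⟨_, Finset.mem_image_of_mem _ hθ, q, hq, hqm, fun i => ∑ k, y k i, fun c => ?_⟩
  simp only [Krivine.sum_Ico_smul_eq_linearCombination hq.monotone hyq x, ← map_smul, ← map_sum]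
  exact hyN c

theorem uniform_krivine (K : ℝ) (hK : 1 ≤ K) (n : ℕ) (ε : ℝ) (hε : 0 < ε) :
    ∃ (m : ℕ) (I : Finset ℝ≥0∞), (∀ p ∈ I, 1 ≤ p) ∧
      ∀ (X : Type) [NormedAddCommGroup X] [NormedSpace ℝ X] [CompleteSpace X]
        (x : ℕ → X),
        (∀ i < m, ‖x i‖ = 1) →
        (∀ (a : ℕ → ℝ) (k : ℕ), k ≤ m →
          ‖∑ i ∈ Finset.range k, a i • x i‖ ≤ K * ‖∑ i ∈ Finset.range m, a i • x i‖) →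
        ∃ p ∈ I, ∃ q : Fin (n + 1) → ℕ, StrictMono q ∧ q (Fin.last n) ≤ m ∧
          ∃ b : ℕ → ℝ,
            ∀ c : Fin n → ℝ,
              lpNorm p c ≤
                  ‖∑ j : Fin n, c j •
                    ∑ i ∈ Finset.Ico (q j.castSucc) (q j.succ), b i • x i‖ ∧
                ‖∑ j : Fin n, c j •
                    ∑ i ∈ Finset.Ico (q j.castSucc) (q j.succ), b i • x i‖ ≤
                  (1 + ε) * lpNorm p c := by
  have hK0 : 0 < K := one_pos.trans_le hK
  obtain ⟨m, I, hI, hm⟩ := uniform_krivine_general 1 (inv_pos.2 hK0) n hε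
  exact ⟨m, I, hI, fun X _ _ _ x hx hbasic => hm X x (fun i hi => (hx i hi).le) fun _ _ =>
    Krivine.inv_le_norm_sub_of_norm_sum_range_le hK0 hx hbasic⟩
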